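/- There exists an absolute constant C such that for every odd prime p and every A ⊆ F_p, the number T(A) of collinear ordered triples of points in A×A satisfies 0 ≤ T(A) − |A|⁶/p ≤ C·min{p^{1/2}·|A|^{7/2}, |A|^{9/2}}. -/

import Mathlib

open Finset

/-- `collinearTriples p A` is the number of ordered triples of points
`((x₁,y₁),(x₂,y₂),(x₃,y₃)) ∈ (A×A)³` which are collinear, i.e. satisfy
`(x₂−x₁)(y₃−y₁) = (x₃−x₁)(y₂−y₁)`. -/
def collinearTriples (p : ℕ) (A : Finset (ZMod p)) : ℕ :=
  ((((A ×ˢ A) ×ˢ (A ×ˢ A)) ×ˢ (A ×ˢ A)).filter fun x =>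
    (x.1.2.1 - x.1.1.1) * (x.2.2 - x.1.1.2) = (x.2.1 - x.1.1.1) * (x.1.2.2 - x.1.1.2)).card

/-!
Count collinear triples by non-vertical lines: writing `r(l)` for the number of points of `A × A`
on `l`, the number of triples is `∑ r(l)³` up to explicit terms, while `∑ r(l)` and `∑ r(l)²` are
known exactly. Cauchy–Schwarz between the three moments gives the lower bound.

The upper bound needs `k⁴ |L| ≪ |A|⁵` for the set `L` of lines with `r(l) ≥ k`, as long as
`|A| |L| ≤ p²`. An incidence of two lines of `L` over two abscissae of `A` is an equation
`c + m x' = c' + m' x`, which says that the left line `t ↦ (c + m t, x, t)` of `u = (x, m, c)` meets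
the right line `t ↦ (c' + m' t, t, x')` of `v = (x', m', c')`; such `u` and `v` are called
conjugate. Conjugate pairs in a set `Ω` of at most `p²` points are bounded by
`|Ω|^(3/2) + k |Ω|`, where `k` bounds the number of points of `Ω` on a line. Indeed, prune `Ω` to a
set of large minimal degree. A polynomial of low degree vanishing on the lines of a small random
sample vanishes on all the lines, being zero at many points of each. For such a polynomial of least
degree, the Hessian bordered by the gradient in the plane of the left, respectively right, lines
vanishes on those lines, and on the other lines as well since these meet many of them; comparing
degrees, some irreducible factor divides both of its bordered Hessians. That makes the factor a
solution of second-order differential equations which, in degree below `p`, are only solved by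
bilinear surfaces `z = a + b y + c x + d y x`, and these contain at most `k` of the lines in each
direction. The argument wants the first coordinate to be injective on `Ω`, which a generic
symplectic change of coordinates over `F(s)` achieves, conjugacy being orthogonality for an
alternating form.

Summing the tail dyadically against the weight `r² - r` when `|A|² ≤ p`, and against
`(r - |A|²/p)²` when `|A|² ≥ p`, proves the theorem.
-/

namespace CollinearTriples

section RestrictLine

open MvPolynomial

variable {σ R : Type*} [CommSemiring R]

/-- The restriction of a polynomial to the parametrised line `t ↦ a + t b`, as a polynomial in the
parameter `t`. -/
noncomputable def restrictLine (a b : σ → R) : MvPolynomial σ R →ₐ[R] Polynomial R :=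
  aeval fun i => Polynomial.C (a i) + Polynomial.C (b i) * Polynomial.X

@[simp]
lemma restrictLine_X (a b : σ → R) (i : σ) :
    restrictLine a b (X i) = Polynomial.C (a i) + Polynomial.C (b i) * Polynomial.X :=
  aeval_X _ i

lemma eval_restrictLine (a b : σ → R) (P : MvPolynomial σ R) (t : R) :
    (restrictLine a b P).eval t = eval (fun i => a i + b i * t) P := by
  induction P using MvPolynomial.induction_on with
  | C c => simp [restrictLine]
  | add P Q hP hQ => simp only [map_add, Polynomial.eval_add, hP, hQ]
  | mul_X P i hP => simp [hP]

lemma natDegree_restrictLine_le (a b : σ → R) (P : MvPolynomial σ R) :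
    (restrictLine a b P).natDegree ≤ P.totalDegree := by
  have hlin (i : σ) : (Polynomial.C (a i) + Polynomial.C (b i) * Polynomial.X).natDegree ≤ 1 :=
    add_comm (Polynomial.C (a i)) _ ▸ Polynomial.natDegree_linear_le
  exact (aeval_natDegree_le P le_rfl _ hlin).trans_eq (mul_one _)

lemma restrictLine_vecCons {n : ℕ} (a₀ b₀ : R) (a b : Fin n → R)
    (P : MvPolynomial (Fin (n + 1)) R) :
    restrictLine (Matrix.vecCons a₀ a) (Matrix.vecCons b₀ b) P =
      (finSuccEquiv R n P).eval₂ (restrictLine a b : MvPolynomial (Fin n) R →+* Polynomial R)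
        (Polynomial.C a₀ + Polynomial.C b₀ * Polynomial.X) := by
  induction P using MvPolynomial.induction_on with
  | C c => simp [finSuccEquiv_apply]
  | add P Q hP hQ => simp only [map_add, Polynomial.eval₂_add, hP, hQ]
  | mul_X P i hP =>
    rw [map_mul, map_mul, Polynomial.eval₂_mul, hP]
    cases i using Fin.cases <;> simp [finSuccEquiv_X_zero, finSuccEquiv_X_succ]

end RestrictLine

section Derivatives

open MvPolynomial

variable {σ R : Type*} [CommRing R]

lemma pderiv_pderiv_comm (i j : σ) (P : MvPolynomial σ R) :
    pderiv i (pderiv j P) = pderiv j (pderiv i P) := by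
  classical
  have bracket_eq_zero :
      ⁅(pderiv i : Derivation R (MvPolynomial σ R) (MvPolynomial σ R)), pderiv j⁆ = 0 :=
    derivation_ext fun k => by
      rw [Derivation.commutator_apply]
      simp [pderiv_X, Pi.single_apply, apply_ite]
  rw [← sub_eq_zero, ← Derivation.commutator_apply, bracket_eq_zero, Derivation.zero_apply]

lemma derivation_aeval {A : Type*} [CommRing A] [Algebra R A] [Fintype σ]
    (D : Derivation R A A) (g : σ → A) (P : MvPolynomial σ R) :
    D (aeval g P) = ∑ i, aeval g (pderiv i P) * D (g i) := by
  classical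
  induction P using MvPolynomial.induction_on with
  | C a => simp
  | add P Q hP hQ => simp only [map_add, hP, hQ, add_mul, sum_add_distrib]
  | mul_X P j hP =>
    have hj : ∑ i, aeval g P * aeval g (pderiv i (X j : MvPolynomial σ R)) * D (g i) =
        aeval g P * D (g j) := by
      simp [pderiv_X, Pi.single_apply, apply_ite]
    simp only [Derivation.leibniz, smul_eq_mul, map_add, map_mul, aeval_X, add_mul,
      sum_add_distrib, hP, hj, mul_sum]
    exact congrArg _ (sum_congr rfl fun i _ => by ring)

lemma derivative_restrictLine [Fintype σ] (a b : σ → R) (P : MvPolynomial σ R) :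
    (restrictLine a b P).derivative =
      ∑ i, Polynomial.C (b i) * restrictLine a b (pderiv i P) := by
  refine (derivation_aeval Polynomial.derivative' _ P).trans (sum_congr rfl fun i _ => ?_)
  rw [mul_comm]
  simp [restrictLine, Polynomial.derivative']

lemma totalDegree_pderiv_le (i : σ) (P : MvPolynomial σ R) :
    (pderiv i P).totalDegree ≤ P.totalDegree - 1 := by
  refine Finset.sup_le fun m hm => ?_
  rw [mem_support_iff, coeff_pderiv] at hm
  have hle := le_totalDegree (mem_support_iff.mpr (left_ne_zero_of_mul hm))
  rw [Finsupp.sum_add_index' (by simp) (by simp), Finsupp.sum_single_index rfl] at hle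
  exact Nat.le_sub_one_of_lt hle

lemma degreeOf_eq_zero_of_pderiv_eq_zero [NoZeroDivisors R] (p : ℕ) [CharP R p] {i : σ}
    {P : MvPolynomial σ R} (hdeg : P.degreeOf i < p) (hP : pderiv i P = 0) :
    P.degreeOf i = 0 := by
  rw [← Nat.le_zero, degreeOf_le_iff]
  intro m hm
  by_contra hmi
  have hle : Finsupp.single i 1 ≤ m := Finsupp.single_le_iff.mpr (by lia)
  have hcoeff := congrArg (coeff (m - Finsupp.single i 1)) hP
  rw [coeff_pderiv, coeff_zero, tsub_add_cancel_of_le hle] at hcoeff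
  have hcast : ((m i : ℕ) : R) = 0 := by
    rw [← (mul_eq_zero.mp hcoeff).resolve_left (mem_support_iff.mp hm), ← Nat.cast_succ]
    congr 1
    simp only [Finsupp.tsub_apply, Finsupp.single_eq_same]
    lia
  have hp_le := Nat.le_of_dvd (by lia) ((CharP.cast_eq_zero_iff R p _).mp hcast)
  exact (hp_le.trans (monomial_le_degreeOf i hm)).not_gt hdeg

end Derivatives

section BorderedHessian

open MvPolynomial

variable {σ R : Type*} [CommRing R]

/-- Up to sign, the determinant of the Hessian of `P` in the variables `i, j` bordered by the
gradient. Along a line in an `i, j`-plane on which `P` vanishes, it is the second derivative of `P`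
up to a square factor, so it vanishes on every such line. -/
noncomputable def borderedHessian (i j : σ) (P : MvPolynomial σ R) : MvPolynomial σ R :=
  pderiv i (pderiv i P) * pderiv j P ^ 2 - 2 * pderiv i P * pderiv j P * pderiv i (pderiv j P) +
    pderiv i P ^ 2 * pderiv j (pderiv j P)

lemma restrictLine_borderedHessian_eq_zero [IsDomain R] [Finite σ] {i j : σ} (hij : i ≠ j)
    {a b : σ → R} (hb : ∀ k, k ≠ i → k ≠ j → b k = 0) (hbj : b j ≠ 0) {P : MvPolynomial σ R}
    (hP : restrictLine a b P = 0) : restrictLine a b (borderedHessian i j P) = 0 := by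
  classical
  cases nonempty_fintype σ
  have hderiv (Q : MvPolynomial σ R) : (restrictLine a b Q).derivative =
      Polynomial.C (b i) * restrictLine a b (pderiv i Q) +
        Polynomial.C (b j) * restrictLine a b (pderiv j Q) := by
    rw [derivative_restrictLine, sum_eq_add i j hij (fun k _ hk => ?_) (by simp) (by simp)]
    rw [hb k hk.1 hk.2, map_zero, zero_mul]
  have hfirst := hderiv P
  rw [hP, Polynomial.derivative_zero] at hfirst
  have hsecond := congrArg Polynomial.derivative hfirst
  simp only [Polynomial.derivative_zero, Polynomial.derivative_add,
    Polynomial.derivative_C_mul, hderiv, pderiv_pderiv_comm j i] at hsecond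
  have hsq : Polynomial.C (b j) ^ 2 * restrictLine a b (borderedHessian i j P) = 0 := by
    simp only [borderedHessian, map_add, map_sub, map_mul, map_pow, map_ofNat]
    linear_combination -restrictLine a b (pderiv i P) ^ 2 * hsecond -
      (restrictLine a b (pderiv i (pderiv i P)) * (Polynomial.C (b j) *
        restrictLine a b (pderiv j P) - Polynomial.C (b i) * restrictLine a b (pderiv i P)) -
        2 * Polynomial.C (b j) * restrictLine a b (pderiv i P) *
          restrictLine a b (pderiv i (pderiv j P))) * hfirst
  exact (mul_eq_zero.mp hsq).resolve_left (pow_ne_zero 2 (Polynomial.C_ne_zero.mpr hbj))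

lemma dvd_borderedHessian_mul_sub (i j : σ) (Q P : MvPolynomial σ R) :
    Q ∣ borderedHessian i j (Q * P) - P ^ 3 * borderedHessian i j Q := by
  rw [← Ideal.Quotient.eq_zero_iff_dvd]
  have hQ : Ideal.Quotient.mk (Ideal.span {Q}) Q = 0 :=
    (Ideal.Quotient.eq_zero_iff_dvd _ _).mpr dvd_rfl
  simp only [borderedHessian, Derivation.leibniz, smul_eq_mul, map_add, map_sub, map_mul, map_pow,
    map_ofNat, hQ, pderiv_pderiv_comm i j Q]
  ring

lemma dvd_borderedHessian_of_dvd_borderedHessian_mul {i j : σ} {Q P : MvPolynomial σ R}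
    (hQ : Prime Q) (hQP : ¬ Q ∣ P) (h : Q ∣ borderedHessian i j (Q * P)) :
    Q ∣ borderedHessian i j Q :=
  (hQ.dvd_or_dvd ((dvd_sub_right h).mp (dvd_borderedHessian_mul_sub i j Q P))).resolve_left
    fun hpow => hQP (hQ.dvd_of_dvd_pow hpow)

lemma totalDegree_borderedHessian_le (i j : σ) (P : MvPolynomial σ R) :
    (borderedHessian i j P).totalDegree ≤ 3 * P.totalDegree := by
  have hfirst (k : σ) : (pderiv k P).totalDegree ≤ P.totalDegree :=
    (totalDegree_pderiv_le k P).trans (Nat.sub_le _ _)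
  have hsecond (k l : σ) : (pderiv k (pderiv l P)).totalDegree ≤ P.totalDegree :=
    (totalDegree_pderiv_le k _).trans ((Nat.sub_le _ _).trans (hfirst l))
  have hmul {F G H : MvPolynomial σ R} (hF : F.totalDegree ≤ P.totalDegree)
      (hG : G.totalDegree ≤ P.totalDegree) (hH : H.totalDegree ≤ P.totalDegree) :
      (F * G * H).totalDegree ≤ 3 * P.totalDegree := by
    have := totalDegree_mul (F * G) H
    have := totalDegree_mul F G
    lia
  have htwo : (2 : MvPolynomial σ R).totalDegree = 0 := totalDegree_C (2 : R)
  rw [borderedHessian, pow_two, pow_two, ← mul_assoc]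
  refine (totalDegree_add _ _).trans (max_le ((totalDegree_sub _ _).trans (max_le ?_ ?_)) ?_)
  · exact hmul (hsecond _ _) (hfirst _) (hfirst _)
  · refine hmul ((totalDegree_mul _ _).trans ?_) (hfirst _) (hsecond _ _)
    rw [htwo, zero_add]
    exact hfirst _
  · exact hmul (hfirst _) (hfirst _) (hsecond _ _)

end BorderedHessian

section Elimination

open MvPolynomial

lemma totalDegree_coeff_finSuccEquiv_le {R : Type*} [CommSemiring R] {n : ℕ}
    (P : MvPolynomial (Fin (n + 1)) R) (i : ℕ) :
    ((finSuccEquiv R n P).coeff i).totalDegree ≤ P.totalDegree := by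
  by_cases hi : (finSuccEquiv R n P).coeff i = 0
  · simp [hi]
  · exact le_self_add.trans (totalDegree_coeff_finSuccEquiv_add_le P i hi)

lemma natDegree_finSuccEquiv_le {R : Type*} [CommSemiring R] {n : ℕ}
    (P : MvPolynomial (Fin (n + 1)) R) : (finSuccEquiv R n P).natDegree ≤ P.totalDegree :=
  (natDegree_finSuccEquiv P).trans_le (degreeOf_le_totalDegree P 0)

lemma finSuccEquiv_rename_succ {R : Type*} [CommSemiring R] {n : ℕ} (r : MvPolynomial (Fin n) R) :
    finSuccEquiv R n (rename Fin.succ r) = Polynomial.C r := by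
  induction r using MvPolynomial.induction_on with
  | C c => simp [finSuccEquiv_apply]
  | add r s hr hs => simp only [map_add, hr, hs]
  | mul_X r i hr => simp only [map_mul, hr, rename_X, finSuccEquiv_X_succ]

lemma totalDegree_resultant_le {σ R : Type*} [CommRing R] {f g : Polynomial (MvPolynomial σ R)}
    {d e : ℕ} (m n : ℕ) (hf : ∀ i, (f.coeff i).totalDegree ≤ d)
    (hg : ∀ i, (g.coeff i).totalDegree ≤ e) :
    (f.resultant g m n).totalDegree ≤ m * e + n * d := by
  rw [Polynomial.resultant, Matrix.det_apply]
  refine totalDegree_finsetSum_le fun τ _ => (totalDegree_smul_le _ _).trans ?_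
  refine (totalDegree_finsetProd _ _).trans ?_
  rw [Fin.sum_univ_add]
  refine add_le_add ((sum_le_card_nsmul _ _ e fun i _ => ?_).trans_eq (by simp))
    ((sum_le_card_nsmul _ _ d fun i _ => ?_).trans_eq (by simp))
  · simp only [Polynomial.sylvester, Matrix.of_apply, Fin.addCases_left]
    split_ifs
    exacts [hg _, by simp]
  · simp only [Polynomial.sylvester, Matrix.of_apply, Fin.addCases_right]
    split_ifs
    exacts [hf _, by simp]

lemma resultant_ne_zero_of_irreducible {R : Type*} [CommRing R] [IsDomain R] [IsGCDMonoid R]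
    {f g : Polynomial R} (hf : Irreducible f) (hdeg : f.natDegree ≠ 0) (hfg : ¬ f ∣ g) :
    f.resultant g ≠ 0 := by
  have hprim : f.IsPrimitive := hf.isPrimitive hdeg
  have hinj : Function.Injective (algebraMap R (FractionRing R)) := IsFractionRing.injective _ _
  have hcop : IsCoprime (f.map (algebraMap R (FractionRing R)))
      (g.map (algebraMap R (FractionRing R))) :=
    (hprim.irreducible_iff_irreducible_map_fraction_map.mp hf).coprime_iff_not_dvd.mpr
      fun hdvd => hfg (hprim.dvd_of_fraction_map_dvd_fraction_map hdvd)
  have hmap := Polynomial.resultant_ne_zero _ _ hcop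
  rw [Polynomial.natDegree_map_eq_of_injective hinj, Polynomial.natDegree_map_eq_of_injective hinj,
    Polynomial.resultant_map_map] at hmap
  exact ne_zero_of_map hmap

lemma exists_mul_add_mul_eq_rename_succ {K : Type*} [Field K] {n : ℕ}
    {Q F : MvPolynomial (Fin (n + 1)) K} (hQ : Irreducible Q) (hdeg : Q.degreeOf 0 ≠ 0)
    (hQF : ¬ Q ∣ F) :
    ∃ r ≠ 0, ∃ A B, Q * A + F * B = rename Fin.succ r ∧
      r.totalDegree ≤ 2 * Q.totalDegree * F.totalDegree := by
  have hirr : Irreducible (finSuccEquiv K n Q) := (MulEquiv.irreducible_iff _).mpr hQ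
  rw [← natDegree_finSuccEquiv] at hdeg
  obtain ⟨A, B, -, -, hAB⟩ := Polynomial.exists_mul_add_mul_eq_C_resultant (finSuccEquiv K n Q)
    (finSuccEquiv K n F) le_rfl le_rfl (Or.inl hdeg)
  refine ⟨_, resultant_ne_zero_of_irreducible hirr hdeg (by rwa [map_dvd_iff]),
    (finSuccEquiv K n).symm A, (finSuccEquiv K n).symm B, (finSuccEquiv K n).injective ?_, ?_⟩
  · simp [finSuccEquiv_rename_succ, hAB]
  · refine (totalDegree_resultant_le _ _ (totalDegree_coeff_finSuccEquiv_le Q)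
      (totalDegree_coeff_finSuccEquiv_le F)).trans ?_
    nlinarith [Nat.mul_le_mul_right F.totalDegree (natDegree_finSuccEquiv_le Q),
      Nat.mul_le_mul_right Q.totalDegree (natDegree_finSuccEquiv_le F)]

end Elimination

section Lines

open MvPolynomial

variable {K : Type*} [Field K]

/-- Points `u = (x, m, c)` and `v = (x', m', c')` of `K³` are conjugate if `c + m x' = c' + m' x`.
This is orthogonality of `(1, x, m, c)` and `(1, x', m', c')` for a symplectic form on `K⁴`. -/
def IsConj (u v : K × K × K) : Prop := u.2.2 + u.2.1 * v.1 = v.2.2 + v.2.1 * u.1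

instance [DecidableEq K] : DecidableRel (IsConj (K := K)) :=
  fun _ _ => inferInstanceAs (Decidable (_ = _))

lemma IsConj.symm {u v : K × K × K} (h : IsConj u v) : IsConj v u := Eq.symm h

/-- The restriction of a polynomial to the left line `t ↦ (c + m t, x, t)` of `(x, m, c)`. -/
noncomputable def leftLine (u : K × K × K) : MvPolynomial (Fin 3) K →ₐ[K] Polynomial K :=
  restrictLine ![u.2.2, u.1, 0] ![u.2.1, 0, 1]

/-- The restriction of a polynomial to the right line `t ↦ (c + m t, t, x)` of `(x, m, c)`. The
left line of `u` meets the right line of `v` exactly when `u` and `v` are conjugate. -/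
noncomputable def rightLine (u : K × K × K) : MvPolynomial (Fin 3) K →ₐ[K] Polynomial K :=
  restrictLine ![u.2.2, 0, u.1] ![u.2.1, 1, 0]

lemma eval_leftLine (u : K × K × K) (P : MvPolynomial (Fin 3) K) (t : K) :
    (leftLine u P).eval t = eval ![u.2.2 + u.2.1 * t, u.1, t] P := by
  rw [leftLine, eval_restrictLine]
  congr 2
  ext i
  fin_cases i <;> simp

lemma eval_rightLine (u : K × K × K) (P : MvPolynomial (Fin 3) K) (t : K) :
    (rightLine u P).eval t = eval ![u.2.2 + u.2.1 * t, t, u.1] P := by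
  rw [rightLine, eval_restrictLine]
  congr 2
  ext i
  fin_cases i <;> simp

lemma IsConj.eval_leftLine_eq {u v : K × K × K} (h : IsConj u v) (P : MvPolynomial (Fin 3) K) :
    (leftLine u P).eval v.1 = (rightLine v P).eval u.1 := by
  rw [eval_leftLine, eval_rightLine, h]

lemma leftLine_borderedHessian_eq_zero {u : K × K × K} {P : MvPolynomial (Fin 3) K}
    (h : leftLine u P = 0) : leftLine u (borderedHessian 0 2 P) = 0 :=
  restrictLine_borderedHessian_eq_zero (by decide) (fun k => by fin_cases k <;> simp) (by simp) h

lemma rightLine_borderedHessian_eq_zero {u : K × K × K} {P : MvPolynomial (Fin 3) K}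
    (h : rightLine u P = 0) : rightLine u (borderedHessian 0 1 P) = 0 :=
  restrictLine_borderedHessian_eq_zero (by decide) (fun k => by fin_cases k <;> simp) (by simp) h

lemma eq_zero_of_eval_fst_eq_zero {T : Finset (K × K × K)}
    (hT : Set.InjOn Prod.fst (T : Set (K × K × K))) {f : Polynomial K}
    (hf : ∀ v ∈ T, f.eval v.1 = 0) (hdeg : f.natDegree < #T) : f = 0 := by
  classical
  rw [← card_image_of_injOn hT] at hdeg
  exact Polynomial.eq_zero_of_natDegree_lt_card_of_eval_eq_zero' f _ (forall_mem_image.mpr hf) hdeg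

lemma leftLine_eq_zero_of_conj {T : Finset (K × K × K)}
    (hT : Set.InjOn Prod.fst (T : Set (K × K × K))) {u : K × K × K}
    {P : MvPolynomial (Fin 3) K} (hdeg : P.totalDegree < #T)
    (hconj : ∀ v ∈ T, IsConj u v) (hP : ∀ v ∈ T, rightLine v P = 0) : leftLine u P = 0 :=
  eq_zero_of_eval_fst_eq_zero hT
    (fun v hv => by rw [(hconj v hv).eval_leftLine_eq, hP v hv, Polynomial.eval_zero])
    ((natDegree_restrictLine_le _ _ P).trans_lt hdeg)

lemma rightLine_eq_zero_of_conj {T : Finset (K × K × K)}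
    (hT : Set.InjOn Prod.fst (T : Set (K × K × K))) {u : K × K × K}
    {P : MvPolynomial (Fin 3) K} (hdeg : P.totalDegree < #T)
    (hconj : ∀ v ∈ T, IsConj u v) (hP : ∀ v ∈ T, leftLine v P = 0) : rightLine u P = 0 :=
  eq_zero_of_eval_fst_eq_zero hT
    (fun v hv => by rw [← (hconj v hv).symm.eval_leftLine_eq, hP v hv, Polynomial.eval_zero])
    ((natDegree_restrictLine_le _ _ P).trans_lt hdeg)

lemma card_le_totalDegree_of_restrictLine_eq_zero {s : Finset K} {r : MvPolynomial (Fin 2) K}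
    (hr : r ≠ 0) (h : ∀ y ∈ s, restrictLine ![y, 0] ![0, 1] r = 0) : #s ≤ r.totalDegree := by
  classical
  have hinj : Function.Injective (restrictLine ![0] ![(1 : K)]) := by
    have heq : restrictLine ![0] ![(1 : K)] = (uniqueAlgEquiv K (Fin 1)).toAlgHom :=
      algHom_ext fun i => by simp
    exact heq ▸ (uniqueAlgEquiv K (Fin 1)).injective
  have hroots : (s.map ⟨C, C_injective (Fin 1) K⟩).val ⊆ (finSuccEquiv K 1 r).roots := by
    refine fun a ha => ?_
    obtain ⟨y, hy, rfl⟩ := mem_map.mp ha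
    refine (Polynomial.mem_roots ((map_ne_zero_iff _ (finSuccEquiv K 1).injective).mpr hr)).mpr
      (hinj ?_)
    have hy0 := h y hy
    have hCy : restrictLine ![0] ![(1 : K)] (C y) = Polynomial.C y := (restrictLine _ _).commutes y
    rwa [restrictLine_vecCons, map_zero, zero_mul, add_zero, ← hCy, ← AlgHom.coe_toRingHom,
      Polynomial.eval₂_at_apply] at hy0
  calc #s = #(s.map ⟨C, C_injective (Fin 1) K⟩) := (card_map _).symm
    _ ≤ (finSuccEquiv K 1 r).natDegree := Polynomial.card_le_degree_of_subset_roots hroots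
    _ ≤ r.totalDegree := natDegree_finSuccEquiv_le r

lemma card_le_totalDegree_of_leftLine_rename_eq_zero {V : Finset (K × K × K)}
    (hV : Set.InjOn Prod.fst (V : Set (K × K × K))) {r : MvPolynomial (Fin 2) K} (hr : r ≠ 0)
    (h : ∀ u ∈ V, leftLine u (rename Fin.succ r) = 0) : #V ≤ r.totalDegree := by
  classical
  rw [← card_image_of_injOn hV]
  refine card_le_totalDegree_of_restrictLine_eq_zero hr (forall_mem_image.mpr fun u hu => ?_)
  rw [← h u hu, leftLine, restrictLine, restrictLine, aeval_rename]
  rfl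

lemma card_le_totalDegree_of_leftLine_eq_zero {V : Finset (K × K × K)}
    (hV : Set.InjOn Prod.fst (V : Set (K × K × K))) {Q : MvPolynomial (Fin 3) K} (hQ : Q ≠ 0)
    (hdeg : Q.degreeOf 0 = 0) (h : ∀ u ∈ V, leftLine u Q = 0) : #V ≤ Q.totalDegree := by
  obtain ⟨r, rfl⟩ : ∃ r, rename Fin.succ r = Q :=
    ⟨_, (finSuccEquiv K 2).injective <| (finSuccEquiv_rename_succ _).trans
      (Polynomial.eq_C_of_natDegree_eq_zero ((natDegree_finSuccEquiv Q).trans hdeg)).symm⟩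
  refine (card_le_totalDegree_of_leftLine_rename_eq_zero hV (ne_zero_of_map hQ) h).trans ?_
  simpa [finSuccEquiv_rename_succ] using totalDegree_coeff_finSuccEquiv_le (rename Fin.succ r) 0

lemma dvd_of_leftLine_eq_zero {V : Finset (K × K × K)}
    (hV : Set.InjOn Prod.fst (V : Set (K × K × K)))
    {Q F : MvPolynomial (Fin 3) K} (hQ : Irreducible Q) (hdeg : Q.degreeOf 0 ≠ 0)
    (hQV : ∀ u ∈ V, leftLine u Q = 0) (hFV : ∀ u ∈ V, leftLine u F = 0)
    (hcard : 2 * Q.totalDegree * F.totalDegree < #V) : Q ∣ F := by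
  by_contra hQF
  obtain ⟨r, hr, A, B, hAB, hdegr⟩ := exists_mul_add_mul_eq_rename_succ hQ hdeg hQF
  refine (card_le_totalDegree_of_leftLine_rename_eq_zero hV hr fun u hu => ?_).not_gt
    (hdegr.trans_lt hcard)
  simp [← hAB, hQV u hu, hFV u hu]

end Lines

section MultilinearODE

open MvPolynomial

variable {σ R : Type*} [CommRing R]

lemma coeff_mul_of_degree_le {k : ℕ} {P Q : MvPolynomial σ R}
    (hQ : ∀ μ, Finsupp.degree μ < k → coeff μ Q = 0) {μ : σ →₀ ℕ} (hμ : Finsupp.degree μ ≤ k) :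
    coeff μ (P * Q) = coeff 0 P * coeff μ Q := by
  classical
  rw [coeff_mul, sum_eq_single (0, μ) _ (by simp)]
  rintro ⟨α, β⟩ hαβ hne
  rw [HasAntidiagonal.mem_antidiagonal] at hαβ
  dsimp only at hαβ ⊢
  have hα : Finsupp.degree α ≠ 0 := by
    rw [Ne, Finsupp.degree_eq_zero_iff]
    rintro rfl
    exact hne (by rw [← hαβ, zero_add])
  rw [← hαβ, map_add] at hμ
  rw [hQ β (by lia), mul_zero]

lemma coeff_pderiv_eq_zero_of_degree_lt {k : ℕ} {P : MvPolynomial σ R}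
    (hP : ∀ μ, Finsupp.degree μ < k + 1 → coeff μ P = 0) (i : σ) :
    ∀ μ, Finsupp.degree μ < k → coeff μ (pderiv i P) = 0 := by
  intro μ hμ
  rw [coeff_pderiv, hP _ (by simpa using hμ), zero_mul]

lemma coeff_eq_zero_of_ode [IsDomain R] (p : ℕ) [CharP R p] {q G M N : MvPolynomial σ R} {i : σ}
    (hG : coeff 0 G ≠ 0) (hode : G * pderiv i (pderiv i q) = M * pderiv i q + N * q)
    (hdeg : q.totalDegree < p) {ν : σ →₀ ℕ}
    (hν : ∀ μ, Finsupp.degree μ < Finsupp.degree ν → coeff μ q = 0) (hi : 2 ≤ ν i) :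
    coeff ν q = 0 := by
  by_contra hne
  obtain ⟨μ, rfl⟩ : ∃ μ, ν = μ + Finsupp.single i 2 :=
    ⟨_, (tsub_add_cancel_of_le (Finsupp.single_le_iff.mpr hi)).symm⟩
  rw [map_add, Finsupp.degree_single] at hν
  have hfirst := coeff_pderiv_eq_zero_of_degree_lt hν i
  have hsecond := coeff_pderiv_eq_zero_of_degree_lt hfirst i
  have hcoeff := congrArg (coeff μ) hode
  rw [coeff_add, coeff_mul_of_degree_le hsecond le_rfl, coeff_mul_of_degree_le hfirst (by lia),
    coeff_mul_of_degree_le hν (by lia), hfirst μ (by lia), hν μ (by lia), mul_zero, mul_zero,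
    add_zero, coeff_pderiv, coeff_pderiv, add_assoc, ← Finsupp.single_add] at hcoeff
  have hlt : μ i + 2 < p := by
    have := (monomial_le_degreeOf i (mem_support_iff.mpr hne)).trans (degreeOf_le_totalDegree q i)
    simp only [Finsupp.add_apply, Finsupp.single_eq_same] at this
    lia
  have hcast (r : ℕ) (hr : r < p) (hr0 : 0 < r) : (r : R) ≠ 0 := fun h =>
    (Nat.le_of_dvd hr0 ((CharP.cast_eq_zero_iff R p r).mp h)).not_gt hr
  have h₁ := hcast (μ i + 1) (by lia) (by lia)
  have h₂ := hcast (μ i + 2) hlt (by lia)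
  refine mul_ne_zero hG (mul_ne_zero (mul_ne_zero hne ?_) ?_) hcoeff
  · simpa [add_assoc, one_add_one_eq_two] using h₂
  · simpa using h₁

lemma eq_zero_of_ode_of_multilinear_coeff [IsDomain R] (p : ℕ) [CharP R p] {q : MvPolynomial σ R}
    {G M N : σ → MvPolynomial σ R} (hG : ∀ i, coeff 0 (G i) ≠ 0)
    (hode : ∀ i, G i * pderiv i (pderiv i q) = M i * pderiv i q + N i * q)
    (hdeg : q.totalDegree < p) (hinit : ∀ ν : σ →₀ ℕ, (∀ i, ν i < 2) → coeff ν q = 0) : q = 0 := by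
  suffices h : ∀ k : ℕ, ∀ ν, Finsupp.degree ν = k → coeff ν q = 0 from
    MvPolynomial.ext _ _ fun ν => h _ ν rfl
  intro k
  induction k using Nat.strong_induction_on with
  | _ k ih =>
    rintro ν rfl
    by_cases hν : ∀ i, ν i < 2
    · exact hinit ν hν
    · push Not at hν
      obtain ⟨i, hi⟩ := hν
      exact coeff_eq_zero_of_ode p (hG i) (hode i) hdeg (fun μ hμ => ih _ hμ μ rfl) hi

lemma totalDegree_aeval_le {τ : Type*} (P : MvPolynomial σ R) {g : σ → MvPolynomial τ R} {n : ℕ}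
    (hg : ∀ i, (g i).totalDegree ≤ n) : (aeval g P).totalDegree ≤ P.totalDegree * n := by
  rw [aeval_def, eval₂_eq]
  refine totalDegree_finsetSum_le fun d hd => (totalDegree_mul _ _).trans ?_
  rw [algebraMap_eq, totalDegree_C, zero_add]
  calc (∏ i ∈ d.support, g i ^ d i).totalDegree ≤ ∑ i ∈ d.support, d i * n :=
        (totalDegree_finsetProd _ _).trans <| sum_le_sum fun i _ =>
          (totalDegree_pow _ _).trans (Nat.mul_le_mul_left _ (hg i))
    _ = (d.sum fun _ e => e) * n := (sum_mul ..).symm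
    _ ≤ P.totalDegree * n := Nat.mul_le_mul_right n (le_totalDegree hd)

/-- The substitution `X i ↦ X i + w i`, which moves the point `w` to the origin. -/
noncomputable def translate (w : σ → R) : MvPolynomial σ R →ₐ[R] MvPolynomial σ R :=
  aeval fun i => X i + C (w i)

lemma translate_neg_translate (w : σ → R) (P : MvPolynomial σ R) :
    translate (-w) (translate w P) = P := by
  rw [translate, translate, comp_aeval_apply]
  simp

lemma coeff_zero_translate (w : σ → R) (P : MvPolynomial σ R) :
    coeff 0 (translate w P) = eval w P := by
  rw [← constantCoeff_eq]
  induction P using MvPolynomial.induction_on with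
  | C c => simp [translate]
  | add P Q hP hQ => simp only [map_add, hP, hQ]
  | mul_X P i hP => rw [map_mul, map_mul, hP]; simp [translate]

lemma pderiv_translate [Finite σ] (w : σ → R) (i : σ) (P : MvPolynomial σ R) :
    pderiv i (translate w P) = translate w (pderiv i P) := by
  classical
  cases nonempty_fintype σ
  rw [translate, derivation_aeval]
  simp [pderiv_X, Pi.single_apply]

lemma totalDegree_translate_le [Nontrivial R] (w : σ → R) (P : MvPolynomial σ R) :
    (translate w P).totalDegree ≤ P.totalDegree := by
  refine (totalDegree_aeval_le P fun i => ?_).trans_eq (mul_one _)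
  exact (totalDegree_add _ _).trans (by simp)

lemma eq_zero_of_ode [IsDomain R] (p : ℕ) [CharP R p] {q G : MvPolynomial (Fin 2) R}
    {M N : Fin 2 → MvPolynomial (Fin 2) R} (w : Fin 2 → R) (hG : eval w G ≠ 0)
    (hode : ∀ i, G * pderiv i (pderiv i q) = M i * pderiv i q + N i * q)
    (hdeg : q.totalDegree < p) (hq : eval w q = 0) (hq₀ : eval w (pderiv 0 q) = 0)
    (hq₁ : eval w (pderiv 1 q) = 0) (hq₀₁ : eval w (pderiv 0 (pderiv 1 q)) = 0) : q = 0 := by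
  rw [← translate_neg_translate w q]
  convert map_zero (translate (-w))
  refine eq_zero_of_ode_of_multilinear_coeff p (G := fun _ => translate w G)
    (M := fun i => translate w (M i)) (N := fun i => translate w (N i))
    (fun _ => by rwa [coeff_zero_translate]) (fun i => ?_)
    ((totalDegree_translate_le w q).trans_lt hdeg) fun ν hν => ?_
  · simp only [pderiv_translate, ← map_mul, ← map_add, hode i]
  simp only [← coeff_zero_translate, ← pderiv_translate, coeff_pderiv, Finsupp.coe_zero,
    Pi.zero_apply, Nat.cast_zero, zero_add, mul_one] at hq hq₀ hq₁ hq₀₁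
  have hν_eq : ν = Finsupp.single 0 (ν 0) + Finsupp.single 1 (ν 1) := by
    ext j
    fin_cases j <;> simp
  have h₀ := hν 0
  have h₁ := hν 1
  rw [hν_eq]
  interval_cases ν 0 <;> interval_cases ν 1
  · simpa using hq
  · simpa using hq₁
  · simpa using hq₀
  · simpa using hq₀₁

end MultilinearODE

section GraphSubst

open MvPolynomial

variable {R : Type*} [CommRing R] {n : ℕ}

/-- The pullback of a polynomial in `n + 1` variables to the graph `X 0 = f` of a polynomial in the
remaining `n` variables. -/
noncomputable def graphSubst (f : MvPolynomial (Fin n) R) :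
    MvPolynomial (Fin (n + 1)) R →ₐ[R] MvPolynomial (Fin n) R :=
  aeval (Fin.cons f X)

lemma graphSubst_eq_eval (f : MvPolynomial (Fin n) R) (Q : MvPolynomial (Fin (n + 1)) R) :
    graphSubst f Q = (finSuccEquiv R n Q).eval f := by
  induction Q using MvPolynomial.induction_on with
  | C c => simp [graphSubst, finSuccEquiv_apply]
  | add P Q hP hQ => simp only [map_add, Polynomial.eval_add, hP, hQ]
  | mul_X P i hP =>
    rw [map_mul, map_mul, Polynomial.eval_mul, hP]
    cases i using Fin.cases <;>
      simp [graphSubst, finSuccEquiv_X_zero, finSuccEquiv_X_succ]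

lemma X_sub_rename_dvd_of_graphSubst_eq_zero {f : MvPolynomial (Fin n) R}
    {Q : MvPolynomial (Fin (n + 1)) R} (h : graphSubst f Q = 0) :
    X 0 - rename Fin.succ f ∣ Q := by
  rw [← map_dvd_iff (finSuccEquiv R n), map_sub, finSuccEquiv_X_zero, finSuccEquiv_rename_succ,
    Polynomial.dvd_iff_isRoot]
  rwa [graphSubst_eq_eval] at h

lemma eval_graphSubst (f : MvPolynomial (Fin n) R) (Q : MvPolynomial (Fin (n + 1)) R)
    (w : Fin n → R) : eval w (graphSubst f Q) = eval (Fin.cons (eval w f) w) Q := by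
  induction Q using MvPolynomial.induction_on with
  | C c => simp [graphSubst]
  | add P Q hP hQ => simp only [map_add, hP, hQ]
  | mul_X P i hP =>
    rw [map_mul, map_mul, map_mul, hP]
    cases i using Fin.cases <;> simp [graphSubst]

lemma pderiv_graphSubst (f : MvPolynomial (Fin n) R) (Q : MvPolynomial (Fin (n + 1)) R)
    (i : Fin n) : pderiv i (graphSubst f Q) =
      graphSubst f (pderiv 0 Q) * pderiv i f + graphSubst f (pderiv i.succ Q) := by
  classical
  rw [graphSubst, derivation_aeval, Fin.sum_univ_succ]
  simp [pderiv_X, Pi.single_apply]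

-- The bordered Hessian eliminates the mixed second derivative from `∂ᵢ∂ᵢ (graphSubst f Q)`.
lemma exists_ode_graphSubst {f : MvPolynomial (Fin n) R} {Q : MvPolynomial (Fin (n + 1)) R}
    {i : Fin n} (hf : pderiv i (pderiv i f) = 0) (hQ : Q ∣ borderedHessian 0 i.succ Q) :
    ∃ M N, graphSubst f (pderiv 0 Q) ^ 2 * pderiv i (pderiv i (graphSubst f Q)) =
      M * pderiv i (graphSubst f Q) + N * graphSubst f Q := by
  obtain ⟨N, hN⟩ := hQ
  have hN' := congrArg (graphSubst f) hN
  simp only [borderedHessian, map_add, map_sub, map_mul, map_pow, map_ofNat] at hN'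
  refine ⟨2 * graphSubst f (pderiv 0 (pderiv 0 Q)) * graphSubst f (pderiv 0 Q) * pderiv i f +
    2 * graphSubst f (pderiv 0 Q) * graphSubst f (pderiv 0 (pderiv i.succ Q)) -
    graphSubst f (pderiv 0 (pderiv 0 Q)) * pderiv i (graphSubst f Q), graphSubst f N, ?_⟩
  simp only [pderiv_graphSubst, map_add, Derivation.leibniz, smul_eq_mul, hf,
    pderiv_pderiv_comm i.succ 0]
  linear_combination hN'

end GraphSubst

section BilinearSurface

open MvPolynomial

variable {K : Type*} [Field K]

/-- The general polynomial `a + b y + c x + d y x` in two variables `y, x` of degree at most one in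
each. -/
noncomputable def bilinear (a b c d : K) : MvPolynomial (Fin 2) K :=
  C a + C b * X 0 + C c * X 1 + C d * X 0 * X 1

lemma pderiv_pderiv_bilinear (a b c d : K) (i : Fin 2) :
    pderiv i (pderiv i (bilinear a b c d)) = 0 := by
  fin_cases i <;> simp [bilinear, pderiv_X]

lemma totalDegree_bilinear_le (a b c d : K) : (bilinear a b c d).totalDegree ≤ 2 := by
  have hmul (r : K) (i : Fin 2) : (C r * X i : MvPolynomial (Fin 2) K).totalDegree ≤ 1 :=
    (totalDegree_mul _ _).trans (by simp)
  refine (totalDegree_add _ _).trans (max_le ((totalDegree_add _ _).trans (max_le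
    ((totalDegree_add _ _).trans (max_le (by simp) ?_)) ?_)) ((totalDegree_mul _ _).trans ?_))
  · exact (hmul b 0).trans one_le_two
  · exact (hmul c 1).trans one_le_two
  · exact add_le_add (hmul d 0) (totalDegree_X (R := K) 1).le

lemma exists_bilinear_jet (w : Fin 2 → K) (s β γ δ : K) :
    ∃ a b c d, eval w (bilinear a b c d) = s ∧ eval w (pderiv 0 (bilinear a b c d)) = β ∧
      eval w (pderiv 1 (bilinear a b c d)) = γ ∧
      pderiv 0 (pderiv 1 (bilinear a b c d)) = C δ := by
  refine ⟨s - β * w 0 - γ * w 1 + δ * w 0 * w 1, β - δ * w 1, γ - δ * w 0, δ, ?_, ?_, ?_, ?_⟩ <;>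
    simp [bilinear, pderiv_X] <;> ring

-- The 2-jet of the graph is chosen so that `Q` vanishes on it at `z` together with its first and
-- mixed second derivatives; the ODEs then force `Q` to vanish on the whole graph.
lemma exists_bilinear_dvd (p : ℕ) [CharP K p] {Q : MvPolynomial (Fin 3) K}
    (h₁ : Q ∣ borderedHessian 0 1 Q) (h₂ : Q ∣ borderedHessian 0 2 Q) {z : Fin 3 → K}
    (hz : eval z Q = 0) (hz' : eval z (pderiv 0 Q) ≠ 0) (hdeg : 2 * Q.totalDegree < p) :
    ∃ a b c d, X 0 - rename Fin.succ (bilinear a b c d) ∣ Q := by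
  have hsolve (r : K) : ∃ t, eval z (pderiv 0 Q) * t + r = 0 :=
    ⟨-r / eval z (pderiv 0 Q), by field_simp; ring⟩
  obtain ⟨β, hβ⟩ := hsolve (eval z (pderiv 1 Q))
  obtain ⟨γ, hγ⟩ := hsolve (eval z (pderiv 2 Q))
  obtain ⟨δ, hδ⟩ := hsolve ((eval z (pderiv 0 (pderiv 0 Q)) * β +
    eval z (pderiv 1 (pderiv 0 Q))) * γ + (eval z (pderiv 0 (pderiv 2 Q)) * β +
      eval z (pderiv 1 (pderiv 2 Q))))
  obtain ⟨a, b, c, d, hf, hf₀, hf₁, hf₀₁⟩ := exists_bilinear_jet (Fin.tail z) (z 0) β γ δ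
  refine ⟨a, b, c, d, X_sub_rename_dvd_of_graphSubst_eq_zero ?_⟩
  set f := bilinear a b c d
  have heval (F : MvPolynomial (Fin 3) K) : eval (Fin.tail z) (graphSubst f F) = eval z F := by
    rw [eval_graphSubst, hf, Fin.cons_self_tail]
  have hBH (i : Fin 2) : Q ∣ borderedHessian 0 i.succ Q := by
    fin_cases i
    exacts [h₁, h₂]
  choose M N hode using fun i => exists_ode_graphSubst (pderiv_pderiv_bilinear a b c d i) (hBH i)
  have hdegf (i : Fin 3) :
      ((Fin.cons f X : Fin 3 → MvPolynomial (Fin 2) K) i).totalDegree ≤ 2 := by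
    cases i using Fin.cases with
    | zero => exact totalDegree_bilinear_le a b c d
    | succ i => simp
  refine eq_zero_of_ode p (Fin.tail z) ?_ hode
    ((totalDegree_aeval_le Q hdegf).trans_lt (by rwa [mul_comm])) ?_ ?_ ?_ ?_
  · rw [map_pow, heval]
    exact pow_ne_zero 2 hz'
  · rw [heval, hz]
  · rwa [pderiv_graphSubst, map_add, map_mul, heval, heval, hf₀]
  · rwa [pderiv_graphSubst, map_add, map_mul, heval, heval, hf₁]
  · simp only [pderiv_graphSubst, map_add, map_mul, Derivation.leibniz, smul_eq_mul, heval, hf₀,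
      hf₁, hf₀₁, eval_C, Fin.succ_zero_eq_one, Fin.succ_one_eq_two]
    linear_combination hδ

lemma rightLine_X_sub_rename_bilinear (a b c d : K) (v : K × K × K) :
    rightLine v (X 0 - rename Fin.succ (bilinear a b c d)) =
      Polynomial.C (v.2.2 - (a + c * v.1)) +
        Polynomial.C (v.2.1 - (b + d * v.1)) * Polynomial.X := by
  simp only [rightLine, bilinear, map_add, map_sub, map_mul, map_zero, map_one, algHom_C,
    algebraMap_eq, Polynomial.algebraMap_eq, rename_X, Fin.succ_zero_eq_one, Fin.succ_one_eq_two,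
    restrictLine_X, Matrix.cons_val]
  ring

lemma eq_of_rightLine_eq_zero {a b c d : K} {Q : MvPolynomial (Fin 3) K} (hQ : Irreducible Q)
    (hdvd : X 0 - rename Fin.succ (bilinear a b c d) ∣ Q) {v : K × K × K}
    (hv : rightLine v Q = 0) : v.2.1 = b + d * v.1 ∧ v.2.2 = a + c * v.1 := by
  obtain ⟨U, rfl⟩ := hdvd
  have hnonunit : ¬ IsUnit (X 0 - rename Fin.succ (bilinear a b c d)) := fun h => by
    have := h.map (rightLine (0, b, a))
    simp [rightLine_X_sub_rename_bilinear] at this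
  have hU : IsUnit U := (hQ.isUnit_or_isUnit rfl).resolve_left hnonunit
  rw [map_mul, mul_eq_zero, or_iff_left (hU.map (rightLine v)).ne_zero,
    rightLine_X_sub_rename_bilinear] at hv
  constructor
  · simpa [sub_eq_zero] using congrArg (Polynomial.coeff · 1) hv
  · simpa [sub_eq_zero] using congrArg (Polynomial.coeff · 0) hv

end BilinearSurface

section MinimalPolynomial

open MvPolynomial

variable {K : Type*} [Field K]

lemma exists_irreducible_dvd_mul_totalDegree_lt {σ ι : Type*}
    {φ : ι → MvPolynomial σ K →ₐ[K] Polynomial K} {P : MvPolynomial σ K} (hP : P ≠ 0) {M : ℕ}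
    {V : Finset ι} (hcard : M * P.totalDegree < #V) (hV : ∀ i ∈ V, φ i P = 0) :
    ∃ Q, Irreducible Q ∧ Q ∣ P ∧
      ∃ W ⊆ V, M * Q.totalDegree < #W ∧ ∀ i ∈ W, φ i Q = 0 := by
  classical
  induction P using WfDvdMonoid.induction_on_irreducible generalizing V with
  | zero => exact absurd rfl hP
  | unit u hu =>
    obtain ⟨i, hi⟩ := card_pos.mp (hcard.trans_le' (Nat.zero_le _))
    exact absurd (hV i hi) (hu.map (φ i)).ne_zero
  | mul R Q hR hQ ih =>
    rw [totalDegree_mul_of_isDomain hQ.ne_zero hR, mul_add] at hcard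
    by_cases hlt : M * Q.totalDegree < #{i ∈ V | φ i Q = 0}
    · exact ⟨Q, hQ, dvd_mul_right _ _, _, filter_subset _ _, hlt,
        fun i hi => (mem_filter.mp hi).2⟩
    · have hsplit := card_filter_add_card_filter_not (s := V) (fun i => φ i Q = 0)
      have hcardR : M * R.totalDegree < #{i ∈ V | ¬ φ i Q = 0} := by lia
      obtain ⟨Q', hQ', hdvd, W, hW, hlt', hWQ'⟩ := ih hR hcardR fun i hi => by
        obtain ⟨hiV, hiQ⟩ := mem_filter.mp hi
        exact (mul_eq_zero.mp ((map_mul (φ i) Q R).symm.trans (hV i hiV))).resolve_left hiQ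
      exact ⟨Q', hQ', hdvd.mul_left Q, W, hW.trans (filter_subset _ _), hlt', hWQ'⟩

lemma one_le_totalDegree_of_irreducible {σ : Type*} {Q : MvPolynomial σ K} (hQ : Irreducible Q) :
    1 ≤ Q.totalDegree := by
  by_contra! h
  have hC := totalDegree_eq_zero_iff_eq_C.mp (Nat.lt_one_iff.mp h)
  refine hQ.not_isUnit (hC ▸ (IsUnit.mk0 _ fun h0 => hQ.ne_zero ?_).map C)
  rw [hC, h0, C_0]

lemma not_dvd_pderiv_mul {σ : Type*} (p : ℕ) [CharP K p] {Q R : MvPolynomial σ K} {i : σ}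
    (hQ : Irreducible Q) (hQR : ¬ Q ∣ R) (hdeg : Q.degreeOf i ≠ 0) (hp : Q.totalDegree < p) :
    ¬ Q ∣ pderiv i (Q * R) := by
  rw [pderiv_mul, dvd_add_left (dvd_mul_right _ _)]
  intro h
  obtain ⟨G, hG⟩ := (hQ.prime.dvd_or_dvd h).resolve_right hQR
  have hG0 : G ≠ 0 := by
    rintro rfl
    exact hdeg (degreeOf_eq_zero_of_pderiv_eq_zero p
      ((degreeOf_le_totalDegree Q i).trans_lt hp) (hG.trans (mul_zero Q)))
  have hle := totalDegree_pderiv_le i Q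
  rw [hG, totalDegree_mul_of_isDomain hQ.ne_zero hG0] at hle
  have hpos := one_le_totalDegree_of_irreducible hQ
  lia

/-- `P` vanishes on the left and right lines of all points of `V`. -/
def VanishesOnLines (V : Finset (K × K × K)) (P : MvPolynomial (Fin 3) K) : Prop :=
  ∀ u ∈ V, leftLine u P = 0 ∧ rightLine u P = 0

/-- `P` is a nonzero polynomial of least total degree among those vanishing on the left and right
lines of all points of `V`. -/
structure IsMinimalVanishing (V : Finset (K × K × K)) (P : MvPolynomial (Fin 3) K) : Prop where
  ne_zero : P ≠ 0
  vanishesOnLines : VanishesOnLines V P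
  totalDegree_le : ∀ R ≠ 0, VanishesOnLines V R → P.totalDegree ≤ R.totalDegree

lemma VanishesOnLines.exists_isMinimalVanishing {V : Finset (K × K × K)}
    {P : MvPolynomial (Fin 3) K} (h : VanishesOnLines V P) (hP : P ≠ 0) :
    ∃ P', IsMinimalVanishing V P' ∧ P'.totalDegree ≤ P.totalDegree := by
  let s : Set (MvPolynomial (Fin 3) K) := {R | R ≠ 0 ∧ VanishesOnLines V R}
  have hs : s.Nonempty := ⟨P, hP, h⟩
  have hmem := Function.argminOn_mem totalDegree s hs
  have hmin (R) (hR : R ≠ 0) (hRV : VanishesOnLines V R) :=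
    Function.argminOn_le totalDegree s (show R ∈ s from ⟨hR, hRV⟩)
  exact ⟨_, ⟨hmem.1, hmem.2, hmin⟩, hmin P hP h⟩

lemma IsMinimalVanishing.not_dvd {V : Finset (K × K × K)} {Q R : MvPolynomial (Fin 3) K}
    (h : IsMinimalVanishing V (Q * R)) (hQ : Irreducible Q) : ¬ Q ∣ R := by
  have hR := right_ne_zero_of_mul h.ne_zero
  rintro ⟨S, rfl⟩
  have hcancel (φ : MvPolynomial (Fin 3) K →ₐ[K] Polynomial K) (hφ : φ (Q * (Q * S)) = 0) :
      φ (Q * S) = 0 := by simpa using hφ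
  have hle := h.totalDegree_le _ hR fun u hu =>
    ⟨hcancel _ (h.vanishesOnLines u hu).1, hcancel _ (h.vanishesOnLines u hu).2⟩
  rw [totalDegree_mul_of_isDomain hQ.ne_zero hR] at hle
  have hpos := one_le_totalDegree_of_irreducible hQ
  lia

lemma IsConj.eval_pderiv_ne_zero_and_rightLine_eq_zero {u v : K × K × K} (huv : IsConj u v)
    {Q R : MvPolynomial (Fin 3) K} (hQ : leftLine u Q = 0) (hv : rightLine v (Q * R) = 0)
    (hne : (leftLine u (pderiv 0 (Q * R))).eval v.1 ≠ 0) :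
    eval ![u.2.2 + u.2.1 * v.1, u.1, v.1] (pderiv 0 Q) ≠ 0 ∧ rightLine v Q = 0 := by
  rw [pderiv_mul, map_add, map_mul, map_mul, hQ, zero_mul, add_zero, Polynomial.eval_mul,
    eval_leftLine] at hne
  rw [map_mul] at hv
  refine ⟨left_ne_zero_of_mul hne, (mul_eq_zero.mp hv).resolve_right fun hR => ?_⟩
  exact right_ne_zero_of_mul hne (by rw [huv.eval_leftLine_eq, hR, Polynomial.eval_zero])

variable [DecidableEq K]

lemma VanishesOnLines.leftLine_borderedHessian {V : Finset (K × K × K)}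
    (hV : Set.InjOn Prod.fst (V : Set (K × K × K))) {P : MvPolynomial (Fin 3) K}
    (hP : VanishesOnLines V P) {u : K × K × K}
    (hu : 3 * P.totalDegree < #{v ∈ V | IsConj u v}) :
    leftLine u (borderedHessian 0 1 P) = 0 :=
  leftLine_eq_zero_of_conj (hV.mono (coe_subset.mpr (filter_subset _ _)))
    ((totalDegree_borderedHessian_le 0 1 P).trans_lt hu) (fun _ hv => (mem_filter.mp hv).2)
    fun v hv => rightLine_borderedHessian_eq_zero (hP v (mem_filter.mp hv).1).2

lemma IsMinimalVanishing.exists_irreducible_factor (p : ℕ) [CharP K p] {V : Finset (K × K × K)}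
    (hV : Set.InjOn Prod.fst (V : Set (K × K × K))) {P : MvPolynomial (Fin 3) K}
    (hP : IsMinimalVanishing V P) (hp : P.totalDegree < p)
    (hcard : 6 * P.totalDegree * P.totalDegree < #V)
    (hconj : ∀ u ∈ V, 3 * P.totalDegree < #{v ∈ V | IsConj u v}) :
    ∃ Q R, Irreducible Q ∧ P = Q * R ∧ Q ∣ borderedHessian 0 1 Q ∧ Q ∣ borderedHessian 0 2 Q ∧
      ∃ u ∈ V, leftLine u Q = 0 ∧ leftLine u (pderiv 0 P) ≠ 0 := by
  obtain ⟨Q, hQ, ⟨R, rfl⟩, W, hWV, hcardW, hWQ⟩ :=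
    exists_irreducible_dvd_mul_totalDegree_lt hP.ne_zero hcard fun u hu =>
      (hP.vanishesOnLines u hu).1
  set P := Q * R with hPQR
  have hQpos := one_le_totalDegree_of_irreducible hQ
  have hQR := hP.not_dvd hQ
  have hQdeg : Q.totalDegree ≤ P.totalDegree := by
    rw [hPQR, totalDegree_mul_of_isDomain hQ.ne_zero (right_ne_zero_of_mul hP.ne_zero)]
    lia
  have hW : Set.InjOn Prod.fst (W : Set (K × K × K)) := hV.mono (coe_subset.mpr hWV)
  have hQ0 : Q.degreeOf 0 ≠ 0 := fun h0 => by
    have hle := card_le_totalDegree_of_leftLine_eq_zero hW hQ.ne_zero h0 hWQ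
    have hmul := Nat.le_mul_of_pos_left Q.totalDegree (show 0 < 6 * P.totalDegree by lia)
    lia
  have hdvd {F : MvPolynomial (Fin 3) K} (hF : F.totalDegree ≤ 3 * P.totalDegree)
      (hFW : ∀ u ∈ W, leftLine u F = 0) : Q ∣ F := by
    refine dvd_of_leftLine_eq_zero hW hQ hQ0 hWQ hFW (lt_of_le_of_lt ?_ hcardW)
    calc 2 * Q.totalDegree * F.totalDegree ≤ 2 * Q.totalDegree * (3 * P.totalDegree) := by gcongr
      _ = 6 * P.totalDegree * Q.totalDegree := by ring
  refine ⟨Q, R, hQ, rfl,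
    dvd_borderedHessian_of_dvd_borderedHessian_mul hQ.prime hQR
      (hdvd (totalDegree_borderedHessian_le 0 1 P) fun u hu =>
        hP.vanishesOnLines.leftLine_borderedHessian hV (hconj u (hWV hu))),
    dvd_borderedHessian_of_dvd_borderedHessian_mul hQ.prime hQR
      (hdvd (totalDegree_borderedHessian_le 0 2 P) fun u hu =>
        leftLine_borderedHessian_eq_zero (hP.vanishesOnLines u (hWV hu)).1), ?_⟩
  by_contra! hall
  have hpderiv : (pderiv 0 P).totalDegree ≤ 3 * P.totalDegree := by
    have := totalDegree_pderiv_le 0 P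
    lia
  exact not_dvd_pderiv_mul p hQ hQR hQ0 (hQdeg.trans_lt hp)
    (hdvd hpderiv fun u hu => hall u (hWV hu) (hWQ u hu))

lemma IsMinimalVanishing.card_conj_le (p : ℕ) [CharP K p] {V : Finset (K × K × K)}
    (hV : Set.InjOn Prod.fst (V : Set (K × K × K))) {P : MvPolynomial (Fin 3) K}
    (hP : IsMinimalVanishing V P) (hp : 2 * P.totalDegree < p)
    (hcard : 6 * P.totalDegree * P.totalDegree < #V)
    (hconj : ∀ u ∈ V, 3 * P.totalDegree < #{v ∈ V | IsConj u v}) {k : ℕ}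
    (hk : ∀ a b c d : K, #{v ∈ V | v.2.1 = b + d * v.1 ∧ v.2.2 = a + c * v.1} ≤ k) :
    ∃ u ∈ V, #{v ∈ V | IsConj u v} ≤ P.totalDegree + k := by
  obtain ⟨Q, R, hQ, rfl, h₁, h₂, u, hu, huQ, huP⟩ :=
    hP.exists_irreducible_factor p hV (by lia) hcard hconj
  refine ⟨u, hu, ?_⟩
  set P := Q * R with hPQR
  set f := leftLine u (pderiv 0 P)
  have hroots : #{v ∈ {v ∈ V | IsConj u v} | f.eval v.1 = 0} ≤ P.totalDegree := by
    have hfdeg : f.natDegree ≤ P.totalDegree := (natDegree_restrictLine_le _ _ _).trans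
      ((totalDegree_pderiv_le 0 P).trans (Nat.sub_le _ _))
    refine le_trans (not_lt.mp fun hlt => huP ?_) hfdeg
    exact eq_zero_of_eval_fst_eq_zero
      (hV.mono (coe_subset.mpr ((filter_subset _ _).trans (filter_subset _ _))))
      (fun v hv => (mem_filter.mp hv).2) hlt
  have hline : #{v ∈ {v ∈ V | IsConj u v} | ¬ f.eval v.1 = 0} ≤ k := by
    obtain hempty | ⟨v₀, hv₀⟩ := {v ∈ {v ∈ V | IsConj u v} | ¬ f.eval v.1 = 0}.eq_empty_or_nonempty
    · rw [hempty, card_empty]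
      exact Nat.zero_le k
    simp only [mem_filter] at hv₀
    obtain ⟨a, b, c, d, hdvd⟩ := exists_bilinear_dvd p h₁ h₂
      (by rw [← eval_leftLine, huQ, Polynomial.eval_zero])
      (hv₀.1.2.eval_pderiv_ne_zero_and_rightLine_eq_zero huQ (hP.vanishesOnLines _ hv₀.1.1).2
        hv₀.2).1
      (lt_of_le_of_lt (by
        rw [hPQR, totalDegree_mul_of_isDomain hQ.ne_zero (right_ne_zero_of_mul hP.ne_zero)]
        lia) hp)
    refine (card_le_card fun v hv => ?_).trans (hk a b c d)
    simp only [mem_filter] at hv ⊢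
    exact ⟨hv.1.1, eq_of_rightLine_eq_zero hQ hdvd
      (hv.1.2.eval_pderiv_ne_zero_and_rightLine_eq_zero huQ (hP.vanishesOnLines _ hv.1.1).2
        hv.2).2⟩
  rw [← card_filter_add_card_filter_not fun v : K × K × K => f.eval v.1 = 0]
  exact add_le_add hroots hline

lemma VanishesOnLines.eq_zero (p : ℕ) [CharP K p] {V : Finset (K × K × K)}
    (hV : Set.InjOn Prod.fst (V : Set (K × K × K))) {P : MvPolynomial (Fin 3) K}
    (hP : VanishesOnLines V P) (hp : 2 * P.totalDegree < p)
    (hcard : 6 * P.totalDegree * P.totalDegree < #V) {k : ℕ}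
    (hconj : ∀ u ∈ V, 3 * P.totalDegree + k < #{v ∈ V | IsConj u v})
    (hk : ∀ a b c d : K, #{v ∈ V | v.2.1 = b + d * v.1 ∧ v.2.2 = a + c * v.1} ≤ k) :
    P = 0 := by
  by_contra hne
  obtain ⟨P', hP', hdeg⟩ := hP.exists_isMinimalVanishing hne
  have hcard' : 6 * P'.totalDegree * P'.totalDegree < #V := lt_of_le_of_lt (by gcongr) hcard
  obtain ⟨u, hu, hle⟩ := hP'.card_conj_le p hV (by lia) hcard'
    (fun u hu => lt_of_le_of_lt (by lia) (hconj u hu)) hk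
  have := hconj u hu
  lia

end MinimalPolynomial

section Sampling

variable {ι : Type*} [DecidableEq ι]

/-- The probability that a random subset of `V`, containing each element independently with
probability `q`, is equal to `S`. -/
def bernoulliWeight (q : ℝ) (V S : Finset ι) : ℝ := q ^ #S * (1 - q) ^ #(V \ S)

lemma bernoulliWeight_nonneg {q : ℝ} (hq0 : 0 ≤ q) (hq1 : q ≤ 1) (V S : Finset ι) :
    0 ≤ bernoulliWeight q V S :=
  mul_nonneg (pow_nonneg hq0 _) (pow_nonneg (sub_nonneg.mpr hq1) _)

lemma sum_bernoulliWeight_mul_pow_card_inter (q x : ℝ) {V N : Finset ι} (hN : N ⊆ V) :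
    ∑ S ∈ V.powerset, bernoulliWeight q V S * x ^ #(S ∩ N) = (1 - q + q * x) ^ #N := by
  have hfactor (j : ι) : q * (if j ∈ N then x else 1) + (1 - q) =
      if j ∈ N then 1 - q + q * x else 1 := by split_ifs <;> ring
  have hpow (S : Finset ι) : ∏ j ∈ S, (if j ∈ N then x else 1) = x ^ #(S ∩ N) := by
    rw [prod_ite_mem, prod_const]
  calc ∑ S ∈ V.powerset, bernoulliWeight q V S * x ^ #(S ∩ N)
      = ∏ j ∈ V, (q * (if j ∈ N then x else 1) + (1 - q)) := by
        rw [prod_add]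
        refine sum_congr rfl fun S _ => ?_
        rw [prod_mul_distrib, prod_const, prod_const, hpow, bernoulliWeight]
        ring
    _ = (1 - q + q * x) ^ #N := by
        simp_rw [hfactor]
        rw [prod_ite_mem, prod_const, inter_eq_right.mpr hN]

lemma sum_bernoulliWeight (q : ℝ) (V : Finset ι) :
    ∑ S ∈ V.powerset, bernoulliWeight q V S = 1 := by
  simpa using sum_bernoulliWeight_mul_pow_card_inter q 1 (empty_subset V)

-- Markov's inequality for `2 ^ #S` and for each `2⁻¹ ^ #(S ∩ N i)`, and a union bound.
lemma exists_subset_forall_lt_card_inter {q : ℝ} (hq0 : 0 ≤ q) (hq1 : q ≤ 1) {V : Finset ι}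
    {N : ι → Finset ι} (hN : ∀ i ∈ V, N i ⊆ V) {B D : ℕ}
    (h : (1 + q) ^ #V / 2 ^ (B + 1) + ∑ i ∈ V, 2 ^ D * (1 - q / 2) ^ #(N i) < 1) :
    ∃ S ⊆ V, #S ≤ B ∧ ∀ i ∈ V, D < #(S ∩ N i) := by
  by_contra! hbad
  have hw := bernoulliWeight_nonneg hq0 hq1 V
  have hone (S) (hS : S ∈ V.powerset) :
      1 ≤ (2 : ℝ) ^ #(S ∩ V) / 2 ^ (B + 1) + ∑ i ∈ V, 2 ^ D * 2⁻¹ ^ #(S ∩ N i) := by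
    rw [inter_eq_left.mpr (mem_powerset.mp hS)]
    obtain hB | hB := le_or_gt #S B
    · obtain ⟨i, hi, hle⟩ := hbad S (mem_powerset.mp hS) hB
      refine le_add_of_nonneg_of_le (by positivity) ((?_ : (1 : ℝ) ≤ _).trans
        (single_le_sum (f := fun i => (2 : ℝ) ^ D * 2⁻¹ ^ #(S ∩ N i)) (fun _ _ => by positivity)
          hi))
      rw [inv_pow, ← div_eq_mul_inv, one_le_div (by positivity)]
      exact pow_le_pow_right₀ one_le_two hle
    · refine le_add_of_le_of_nonneg ?_ (by positivity)
      rw [one_le_div (by positivity)]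
      exact pow_le_pow_right₀ one_le_two hB
  refine h.not_ge ?_
  calc (1 : ℝ) = ∑ S ∈ V.powerset, bernoulliWeight q V S * 1 := by
        simp [sum_bernoulliWeight]
    _ ≤ ∑ S ∈ V.powerset, bernoulliWeight q V S *
          (2 ^ #(S ∩ V) / 2 ^ (B + 1) + ∑ i ∈ V, 2 ^ D * 2⁻¹ ^ #(S ∩ N i)) :=
        sum_le_sum fun S hS => mul_le_mul_of_nonneg_left (hone S hS) (hw S)
    _ = (∑ S ∈ V.powerset, bernoulliWeight q V S * 2 ^ #(S ∩ V)) / 2 ^ (B + 1) +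
          ∑ i ∈ V, 2 ^ D * ∑ S ∈ V.powerset, bernoulliWeight q V S * 2⁻¹ ^ #(S ∩ N i) := by
        simp_rw [mul_add, sum_add_distrib, mul_sum, sum_div, mul_div_assoc]
        rw [sum_comm]
        simp_rw [mul_left_comm]
    _ = (1 + q) ^ #V / 2 ^ (B + 1) + ∑ i ∈ V, 2 ^ D * (1 - q / 2) ^ #(N i) := by
        rw [sum_bernoulliWeight_mul_pow_card_inter q 2 subset_rfl]
        congr 1
        · ring
        · refine sum_congr rfl fun i hi => ?_
          rw [sum_bernoulliWeight_mul_pow_card_inter q 2⁻¹ (hN i hi)]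
          ring

lemma exists_subset_forall_lt_card_inter_of_exp {q : ℝ} (hq0 : 0 ≤ q) (hq1 : q ≤ 1)
    {V : Finset ι} {N : ι → Finset ι} (hN : ∀ i ∈ V, N i ⊆ V) {B D Δ : ℕ}
    (hΔ : ∀ i ∈ V, Δ ≤ #(N i)) (hB : q * #V ≤ B * Real.log 2)
    (hD : 2 * #V * 2 ^ D < Real.exp (q * Δ / 2)) :
    ∃ S ⊆ V, #S ≤ B ∧ ∀ i ∈ V, D < #(S ∩ N i) := by
  refine exists_subset_forall_lt_card_inter hq0 hq1 hN ?_
  have hfirst : (1 + q) ^ #V / 2 ^ (B + 1) ≤ 1 / 2 := by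
    rw [div_le_div_iff₀ (by positivity) two_pos, pow_succ (2 : ℝ), one_mul]
    gcongr
    calc (1 + q) ^ #V ≤ Real.exp q ^ #V := by
          gcongr
          linarith [Real.add_one_le_exp q]
      _ = Real.exp (q * #V) := by rw [← Real.exp_nat_mul, mul_comm]
      _ ≤ Real.exp (B * Real.log 2) := Real.exp_le_exp.mpr hB
      _ = 2 ^ B := by rw [Real.exp_nat_mul, Real.exp_log two_pos]
  have hsecond (i) (hi : i ∈ V) :
      2 ^ D * (1 - q / 2) ^ #(N i) ≤ 2 ^ D / Real.exp (q * Δ / 2) := by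
    rw [div_eq_mul_inv (2 ^ D), ← Real.exp_neg]
    gcongr
    calc (1 - q / 2) ^ #(N i) ≤ (1 - q / 2) ^ Δ :=
          pow_le_pow_of_le_one (by linarith) (by linarith) (hΔ i hi)
      _ ≤ Real.exp (-(q / 2)) ^ Δ :=
          pow_le_pow_left₀ (by linarith) (Real.one_sub_le_exp_neg _) _
      _ = Real.exp (-(q * Δ / 2)) := by
          rw [← Real.exp_nat_mul]
          ring_nf
  calc (1 + q) ^ #V / 2 ^ (B + 1) + ∑ i ∈ V, 2 ^ D * (1 - q / 2) ^ #(N i)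
      ≤ 1 / 2 + #V * (2 ^ D / Real.exp (q * Δ / 2)) := by
        rw [← nsmul_eq_mul]
        exact add_le_add hfirst (sum_le_card_nsmul _ _ _ hsecond)
    _ < 1 / 2 + 1 / 2 := by
        gcongr
        rw [← mul_div_assoc, div_lt_div_iff₀ (Real.exp_pos _) two_pos]
        linarith
    _ = 1 := by norm_num

lemma exists_subset_card_le_sq {V : Finset ι} {N : ι → Finset ι} (hN : ∀ i ∈ V, N i ⊆ V) {r : ℕ}
    (hr : 1 ≤ r) (hV : #V ≤ 200000 * r ^ 2) (hΔ : ∀ i ∈ V, 10 ^ 8 * r ≤ #(N i)) :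
    ∃ S ⊆ V, #S ≤ 100 * r ^ 2 ∧ ∀ i ∈ V, 90 * r < #(S ∩ N i) := by
  have hV' : (#V : ℝ) ≤ 200000 * r ^ 2 := mod_cast hV
  refine exists_subset_forall_lt_card_inter_of_exp (q := 1 / 200000) (by norm_num) (by norm_num)
    hN hΔ ?_ ?_
  · push_cast
    nlinarith [Real.log_two_gt_d9, sq_nonneg (r : ℝ)]
  · have hexp : (2 : ℝ) ≤ Real.exp 1 := by linarith [Real.exp_one_gt_d9]
    have hsq : (r : ℝ) ^ 2 ≤ 2 ^ (2 * r) := by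
      rw [mul_comm, pow_mul]
      gcongr
      exact_mod_cast Nat.lt_two_pow_self.le
    calc 2 * #V * (2 : ℝ) ^ (90 * r) ≤ 2 ^ 19 * 2 ^ (2 * r) * 2 ^ (90 * r) :=
          mul_le_mul_of_nonneg_right (by linarith) (by positivity)
      _ < 2 ^ (250 * r) := by
          rw [← pow_add, ← pow_add]
          exact pow_lt_pow_right₀ one_lt_two (by lia)
      _ ≤ Real.exp 1 ^ (250 * r) := by gcongr
      _ = Real.exp (1 / 200000 * ((10 ^ 8 * r : ℕ) : ℝ) / 2) := by
          rw [← Real.exp_nat_mul]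
          push_cast
          ring_nf

end Sampling

section Interpolation

open MvPolynomial

lemma totalDegree_le_of_mem_restrictSupport_Iic {σ R : Type*} [Fintype σ] [CommSemiring R]
    {d : σ →₀ ℕ} {P : MvPolynomial σ R} (hP : P ∈ restrictSupport R (Set.Iic d)) :
    P.totalDegree ≤ ∑ i, d i := by
  refine Finset.sup_le fun e he => ?_
  rw [Finsupp.sum_fintype e (fun _ n => n) fun _ => rfl]
  exact sum_le_sum fun i _ => ((mem_restrictSupport_iff R).mp hP (mem_coe.mpr he) : e ≤ d) i

lemma finrank_restrictSupport_Iic {σ R : Type*} [Fintype σ] [CommRing R] [Nontrivial R]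
    (d : σ →₀ ℕ) : Module.finrank R (restrictSupport R (Set.Iic d)) = ∏ i, (d i + 1) := by
  classical
  rw [Module.finrank_eq_nat_card_basis (basisRestrictSupport R _), ← coe_Iic,
    Nat.card_coe_set_eq, Set.ncard_coe_finset, Finsupp.card_Iic]
  simp_rw [Nat.card_Iic]
  exact prod_subset (subset_univ _) fun i _ hi => by simpa using hi

lemma exists_ne_zero_forall_restrictLine_eq_zero {K ι : Type*} [Field K] {n : ℕ} (S : Finset ι)
    (a b : ι → Fin n → K) {m : ℕ} (h : #S * (n * m + 1) < (m + 1) ^ n) :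
    ∃ P ≠ 0, P.totalDegree ≤ n * m ∧ ∀ i ∈ S, restrictLine (a i) (b i) P = 0 := by
  classical
  let d : Fin n →₀ ℕ := Finsupp.equivFunOnFinite.symm fun _ => m
  let Φ : restrictSupport K (Set.Iic d) →ₗ[K] (S × Fin (n * m + 1) → K) :=
    LinearMap.pi fun x => Polynomial.lcoeff K x.2 ∘ₗ
      (restrictLine (a x.1) (b x.1)).toLinearMap ∘ₗ Submodule.subtype _
  have : Module.Finite K (restrictSupport K (Set.Iic d)) :=
    have := (Set.finite_Iic d).to_subtype
    .of_basis (basisRestrictSupport K _)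
  have hker : LinearMap.ker Φ ≠ ⊥ := by
    refine LinearMap.ker_ne_bot_of_finrank_lt ?_
    rw [finrank_restrictSupport_Iic, Module.finrank_pi]
    simpa [d] using h
  obtain ⟨⟨P, hP⟩, hPker, hP0⟩ := Submodule.exists_mem_ne_zero_of_ne_bot hker
  have hdeg : P.totalDegree ≤ n * m :=
    (totalDegree_le_of_mem_restrictSupport_Iic hP).trans_eq (by simp [d])
  refine ⟨P, fun h0 => hP0 (Subtype.ext h0), hdeg, fun i hi => Polynomial.ext fun t => ?_⟩
  obtain ht | ht := lt_or_ge t (n * m + 1)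
  · exact congrFun (LinearMap.mem_ker.mp hPker) (⟨i, hi⟩, ⟨t, ht⟩)
  · exact Polynomial.coeff_eq_zero_of_natDegree_lt
      (((natDegree_restrictLine_le _ _ P).trans hdeg).trans_lt ht)

end Interpolation

section Incidences

lemma sum_card_filter_le_sum_erase {ι : Type*} [DecidableEq ι] {r : ι → ι → Prop}
    [DecidableRel r] (hr : Std.Symm r) (s : Finset ι) (v : ι) :
    ∑ i ∈ s, #{j ∈ s | r i j} ≤
      ∑ i ∈ s.erase v, #{j ∈ s.erase v | r i j} + 2 * #{j ∈ s | r v j} := by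
  by_cases hv : v ∈ s
  swap
  · rw [erase_eq_of_notMem hv]
    exact Nat.le_add_right _ _
  have hdrop (i : ι) : #{j ∈ s | r i j} ≤ #{j ∈ s.erase v | r i j} + if r v i then 1 else 0 := by
    rw [filter_erase]
    split_ifs with hvi
    · exact Nat.sub_le_iff_le_add.mp pred_card_le_card_erase
    · rw [erase_eq_of_notMem fun hmem => hvi (hr.symm _ _ (mem_filter.mp hmem).2), add_zero]
  calc ∑ i ∈ s, #{j ∈ s | r i j}
      = ∑ i ∈ s.erase v, #{j ∈ s | r i j} + #{j ∈ s | r v j} := (sum_erase_add _ _ hv).symm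
    _ ≤ ∑ i ∈ s.erase v, (#{j ∈ s.erase v | r i j} + if r v i then 1 else 0) +
          #{j ∈ s | r v j} := by
        gcongr with i
        exact hdrop i
    _ = ∑ i ∈ s.erase v, #{j ∈ s.erase v | r i j} + #{j ∈ s.erase v | r v j} +
          #{j ∈ s | r v j} := by rw [sum_add_distrib, card_filter _ (s.erase v)]
    _ ≤ ∑ i ∈ s.erase v, #{j ∈ s.erase v | r i j} + 2 * #{j ∈ s | r v j} := by
        have := card_le_card (filter_subset_filter (r v) (erase_subset v s))
        lia

lemma exists_subset_forall_lt_card_filter {ι : Type*} {r : ι → ι → Prop} [DecidableRel r]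
    (hr : Std.Symm r) {Δ : ℕ} {s : Finset ι} (h : 2 * Δ * #s < ∑ i ∈ s, #{j ∈ s | r i j}) :
    ∃ t ⊆ s, t.Nonempty ∧ ∀ i ∈ t, Δ < #{j ∈ t | r i j} := by
  classical
  induction s using Finset.strongInduction with
  | H s ih =>
    by_cases hall : ∀ i ∈ s, Δ < #{j ∈ s | r i j}
    · exact ⟨s, subset_rfl, nonempty_of_sum_ne_zero (Nat.ne_zero_of_lt h), hall⟩
    · push Not at hall
      obtain ⟨v, hv, hle⟩ := hall
      have hsum := sum_card_filter_le_sum_erase hr s v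
      rw [← card_erase_add_one hv, mul_add] at h
      obtain ⟨t, hts, ht⟩ := ih (s.erase v) (erase_ssubset hv) (by lia)
      exact ⟨t, hts.trans (erase_subset v s), ht⟩

open MvPolynomial

variable {K : Type*} [Field K] [DecidableEq K]

lemma exists_ne_zero_vanishesOnLines {V : Finset (K × K × K)}
    (hV : Set.InjOn Prod.fst (V : Set (K × K × K))) {r : ℕ} (hr : 1 ≤ r)
    (hcard : #V ≤ 200000 * r ^ 2) (hconj : ∀ u ∈ V, 10 ^ 8 * r ≤ #{v ∈ V | IsConj u v}) :
    ∃ P ≠ 0, P.totalDegree ≤ 90 * r ∧ VanishesOnLines V P := by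
  obtain ⟨S, hSV, hScard, hS⟩ :=
    exists_subset_card_le_sq (fun _ _ => filter_subset _ _) hr hcard hconj
  obtain ⟨P, hP, hdeg, hPS⟩ := exists_ne_zero_forall_restrictLine_eq_zero S
    (fun u => ![u.2.2, 0, u.1]) (fun u => ![u.2.1, 1, 0]) (m := 30 * r) (by
      calc #S * (3 * (30 * r) + 1) ≤ 100 * r ^ 2 * (3 * (30 * r) + r) := by gcongr
        _ = 9100 * r ^ 3 := by ring
        _ ≤ (30 * r) ^ 3 := by lia
        _ < (30 * r + 1) ^ 3 := Nat.pow_lt_pow_left (Nat.lt_succ_self _) three_ne_zero)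
  have hleft (u) (hu : u ∈ V) : leftLine u P = 0 :=
    leftLine_eq_zero_of_conj (T := S ∩ {v ∈ V | IsConj u v})
      (hV.mono (coe_subset.mpr (inter_subset_left.trans hSV)))
      (lt_of_le_of_lt (by lia) (hS u hu))
      (fun _ hv => (mem_filter.mp (mem_inter.mp hv).2).2) fun v hv => hPS v (mem_inter.mp hv).1
  have hright (u) (hu : u ∈ V) : rightLine u P = 0 :=
    rightLine_eq_zero_of_conj (hV.mono (coe_subset.mpr (filter_subset _ _)))
      (lt_of_lt_of_le (by lia) (hconj u hu))
      (fun _ hv => (mem_filter.mp hv).2) fun v hv => hleft v (mem_filter.mp hv).1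
  exact ⟨P, hP, by lia, fun u hu => ⟨hleft u hu, hright u hu⟩⟩

lemma exists_card_conj_lt (p : ℕ) [CharP K p] {V : Finset (K × K × K)}
    (hV : Set.InjOn Prod.fst (V : Set (K × K × K))) {k r : ℕ}
    (hk : ∀ a b c d : K, #{v ∈ V | v.2.1 = b + d * v.1 ∧ v.2.2 = a + c * v.1} ≤ k)
    (hr : 1 ≤ r) (hVr : 50000 * r ^ 2 ≤ #V) (hVr' : #V ≤ 200000 * r ^ 2) (hp : 180 * r < p) :
    ∃ u ∈ V, #{v ∈ V | IsConj u v} < 10 ^ 8 * r + k := by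
  by_contra! hconj
  obtain ⟨P, hP, hdeg, hPV⟩ := exists_ne_zero_vanishesOnLines hV hr hVr'
    fun u hu => (Nat.le_add_right _ k).trans (hconj u hu)
  refine hP (hPV.eq_zero p hV (by lia) ?_ (fun u hu => lt_of_lt_of_le (by lia) (hconj u hu)) hk)
  calc 6 * P.totalDegree * P.totalDegree ≤ 6 * (90 * r) * (90 * r) := by gcongr
    _ = 48600 * r ^ 2 := by ring
    _ < 50000 * r ^ 2 := by gcongr; norm_num
    _ ≤ #V := hVr

lemma exists_sq_near {n : ℕ} (hn : 50000 ≤ n) :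
    ∃ r, 1 ≤ r ∧ 50000 * r ^ 2 ≤ n ∧ n ≤ 200000 * r ^ 2 := by
  have hle := Nat.sqrt_le' (n / 50000)
  have hlt := Nat.lt_succ_sqrt' (n / 50000)
  have hpos : 1 ≤ Nat.sqrt (n / 50000) := Nat.sqrt_pos.mpr (by lia)
  have hsq : (Nat.sqrt (n / 50000)).succ ^ 2 ≤ 4 * Nat.sqrt (n / 50000) ^ 2 := by
    rw [← Nat.mul_pow 2 _ 2]
    exact Nat.pow_le_pow_left (by lia) 2
  exact ⟨_, hpos, by lia, by lia⟩

theorem sum_card_conj_le_of_injOn_fst (p : ℕ) [CharP K p] {Ω : Finset (K × K × K)}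
    (hΩ : Set.InjOn Prod.fst (Ω : Set (K × K × K))) {k : ℕ}
    (hk : ∀ a b c d : K, #{v ∈ Ω | v.2.1 = b + d * v.1 ∧ v.2.2 = a + c * v.1} ≤ k)
    (hcard : #Ω ≤ p ^ 2) :
    ∑ u ∈ Ω, #{v ∈ Ω | IsConj u v} ≤ 2 * (10 ^ 8 * (Nat.sqrt #Ω + 1) + k) * #Ω := by
  by_contra! hlt
  obtain ⟨V, hVΩ, ⟨v, hv⟩, hV⟩ :=
    exists_subset_forall_lt_card_filter ⟨fun _ _ => IsConj.symm⟩ hlt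
  have hVcard : #V ≤ #Ω := card_le_card hVΩ
  have hlarge : 50000 ≤ #V := by
    have h₁ := hV v hv
    have h₂ := card_filter_le V (IsConj v)
    lia
  obtain ⟨r, hr, hVr, hVr'⟩ := exists_sq_near hlarge
  have hrsqrt : r ≤ Nat.sqrt #Ω := Nat.le_sqrt'.mpr (by lia)
  have hp : 180 * r < p := lt_of_pow_lt_pow_left₀ 2 (Nat.zero_le p) <| by
    have : 0 < r ^ 2 := pow_pos hr 2
    rw [mul_pow]
    lia
  obtain ⟨u, hu, hconj⟩ := exists_card_conj_lt p (hΩ.mono (coe_subset.mpr hVΩ))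
    (fun a b c d => (card_le_card (filter_subset_filter _ hVΩ)).trans (hk a b c d)) hr hVr hVr' hp
  have := hV u hu
  lia

end Incidences

section GenericShear

variable {F K : Type*} [Field F] [Field K] [Algebra F K]

/-- The first coordinate of `genericShear s u` before normalization. -/
def shearNum (s : K) (u : F × F × F) : K :=
  algebraMap F K u.1 + algebraMap F K u.2.2 * s + algebraMap F K u.2.1 * s ^ 3

/-- The factor by which `genericShear s u` is normalized. -/
def shearDenom (s : K) (u : F × F × F) : K := 1 + algebraMap F K u.2.1 * s

/-- Points `(x, m, c)`, in homogeneous coordinates `(1 : x : m : c)`, are conjugate when they are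
orthogonal for a symplectic form. This is the symplectic transformation
`(1 : x : m : c) ↦ (1 + m s : x + c s + m s³ : m : c)`, which, for `s` transcendental over `F`,
separates the first coordinates of the points with coordinates in `F`. -/
def genericShear (s : K) (u : F × F × F) : K × K × K :=
  (shearNum s u / shearDenom s u, algebraMap F K u.2.1 / shearDenom s u,
    algebraMap F K u.2.2 / shearDenom s u)

variable {s : K}

lemma shearDenom_ne_zero (hs : Transcendental F s) (u : F × F × F) : shearDenom s u ≠ 0 := by
  have hne : (1 + .C u.2.1 * .X : Polynomial F) ≠ 0 := fun h => by
    simpa using congrArg (Polynomial.coeff · 0) h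
  simpa [shearDenom] using (transcendental_iff_injective.mp hs).ne hne

lemma isConj_genericShear_iff (hs : Transcendental F s) (u v : F × F × F) :
    IsConj (genericShear s u) (genericShear s v) ↔ IsConj u v := by
  have hu := shearDenom_ne_zero hs u
  have hv := shearDenom_ne_zero hs v
  rw [IsConj, IsConj, ← (algebraMap F K).injective.eq_iff]
  simp only [genericShear, map_add, map_mul]
  field_simp
  simp only [shearNum, shearDenom]
  constructor <;> intro h <;> linear_combination h

lemma genericShear_fst_injective (hs : Transcendental F s) :
    Function.Injective fun u : F × F × F => (genericShear s u).1 := by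
  intro u v h
  let f (u v : F × F × F) : Polynomial F :=
    (.C u.1 + .C u.2.2 * .X + .C u.2.1 * .X ^ 3) * (1 + .C v.2.1 * .X)
  have hf (u v : F × F × F) : Polynomial.aeval s (f u v) = shearNum s u * shearDenom s v := by
    simp [f, shearNum, shearDenom]
  have hcoeff (u v : F × F × F) : f u v = .C u.1 + .C (u.2.2 + u.1 * v.2.1) * .X ^ 1 +
      .C (u.2.2 * v.2.1) * .X ^ 2 + .C u.2.1 * .X ^ 3 + .C (u.2.1 * v.2.1) * .X ^ 4 := by
    simp only [f, Polynomial.C_add, Polynomial.C_mul]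
    ring
  have huv : f u v = f v u := transcendental_iff_injective.mp hs <| by
    rw [hf, hf]
    exact (div_eq_div_iff (shearDenom_ne_zero hs u) (shearDenom_ne_zero hs v)).mp h
  rw [hcoeff, hcoeff] at huv
  have hx : u.1 = v.1 := by simpa using congrArg (Polynomial.coeff · 0) huv
  have hm : u.2.1 = v.2.1 := by
    simpa [Polynomial.coeff_C, Polynomial.coeff_X_pow, -map_mul, -map_add] using
      congrArg (Polynomial.coeff · 3) huv
  have hc : u.2.2 + u.1 * v.2.1 = v.2.2 + v.1 * u.2.1 := by
    simpa [Polynomial.coeff_C, Polynomial.coeff_X_pow, -map_mul, -map_add] using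
      congrArg (Polynomial.coeff · 1) huv
  rw [hx, hm] at hc
  exact Prod.ext hx (Prod.ext hm (add_right_cancel hc))

lemma sub_mul_sub_eq_of_mem_span_pair {ι : Type*} {g d a b : ι → K}
    (h1 : 1 ∈ Submodule.span K {g, d}) (ha : a ∈ Submodule.span K {g, d})
    (hb : b ∈ Submodule.span K {g, d}) (i j k : ι) :
    (a j - a i) * (b k - b i) = (a k - a i) * (b j - b i) := by
  obtain ⟨α, α', rfl⟩ := Submodule.mem_span_pair.mp ha
  obtain ⟨β, β', rfl⟩ := Submodule.mem_span_pair.mp hb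
  obtain ⟨γ, γ', h⟩ := Submodule.mem_span_pair.mp h1
  have h (i : ι) : γ * g i + γ' * d i = 1 := congrFun h i
  simp only [Pi.add_apply, Pi.smul_apply, smul_eq_mul]
  have hi := h i
  have hj := h j
  have hk := h k
  linear_combination (α * β' - α' * β) * (- (g j * d k - g k * d j) * hi
    + (g i * d k - g k * d i) * hj - (g i * d j - g j * d i) * hk)

lemma collinear_of_sub_mul_sub_eq {S : Set (F × F × F)}
    (h : ∀ u ∈ S, ∀ v ∈ S, ∀ w ∈ S,
      (v.1 - u.1) * (w.2.1 - u.2.1) = (w.1 - u.1) * (v.2.1 - u.2.1) ∧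
      (v.1 - u.1) * (w.2.2 - u.2.2) = (w.1 - u.1) * (v.2.2 - u.2.2) ∧
      (v.2.1 - u.2.1) * (w.2.2 - u.2.2) = (w.2.1 - u.2.1) * (v.2.2 - u.2.2)) :
    Collinear F S := by
  obtain hS | ⟨u, hu, v, hv, huv⟩ := S.subsingleton_or_nontrivial
  · obtain rfl | ⟨u, rfl⟩ := Set.Subsingleton.eq_empty_or_singleton hS
    exacts [collinear_empty F _, collinear_singleton F u]
  refine (collinear_iff_of_mem hu).mpr ⟨v - u, fun w hw => ?_⟩
  obtain ⟨h₁, h₂, h₃⟩ := h u hu v hv w hw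
  suffices ∃ r : F, w.1 = r * (v.1 - u.1) + u.1 ∧ w.2.1 = r * (v.2.1 - u.2.1) + u.2.1 ∧
      w.2.2 = r * (v.2.2 - u.2.2) + u.2.2 by
    obtain ⟨r, e₁, e₂, e₃⟩ := this
    exact ⟨r, Prod.ext e₁ (Prod.ext e₂ e₃)⟩
  by_cases hx : v.1 - u.1 = 0
  · by_cases hm : v.2.1 - u.2.1 = 0
    · have hc : v.2.2 - u.2.2 ≠ 0 := fun hc =>
        huv (Prod.ext (sub_eq_zero.mp hx) (Prod.ext (sub_eq_zero.mp hm) (sub_eq_zero.mp hc))).symm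
      refine ⟨(w.2.2 - u.2.2) / (v.2.2 - u.2.2), ?_, ?_, ?_⟩ <;> rw [← sub_eq_iff_eq_add] <;>
        field_simp
      · linear_combination -h₂
      · linear_combination -h₃
    · refine ⟨(w.2.1 - u.2.1) / (v.2.1 - u.2.1), ?_, ?_, ?_⟩ <;> rw [← sub_eq_iff_eq_add] <;>
        field_simp
      · linear_combination -h₁
      · linear_combination h₃
  · refine ⟨(w.1 - u.1) / (v.1 - u.1), ?_, ?_, ?_⟩ <;> rw [← sub_eq_iff_eq_add] <;> field_simp
    · linear_combination h₁
    · linear_combination h₂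

lemma collinear_of_genericShear_mem_line (hs : Transcendental F s) {S : Set (F × F × F)}
    {a b c d : K}
    (h : ∀ u ∈ S, (genericShear s u).2.1 = b + d * (genericShear s u).1 ∧
      (genericShear s u).2.2 = a + c * (genericShear s u).1) : Collinear F S := by
  let x (u : S) : K := algebraMap F K u.1.1
  let m (u : S) : K := algebraMap F K u.1.2.1
  let c' (u : S) : K := algebraMap F K u.1.2.2
  let g (u : S) : K := shearDenom s u.1
  let e (u : S) : K := shearNum s u.1
  have hg : g ∈ Submodule.span K {g, e} := Submodule.subset_span (by simp)
  have he : e ∈ Submodule.span K {g, e} := Submodule.subset_span (by simp)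
  have hm : m ∈ Submodule.span K {g, e} := by
    refine Submodule.mem_span_pair.mpr ⟨b, d, funext fun u => ?_⟩
    have hu := (h u u.2).1
    have := shearDenom_ne_zero hs u.1
    simp only [genericShear] at hu
    field_simp at hu
    simp only [Pi.add_apply, Pi.smul_apply, smul_eq_mul, g, e, m]
    linear_combination -hu
  have hc : c' ∈ Submodule.span K {g, e} := by
    refine Submodule.mem_span_pair.mpr ⟨a, c, funext fun u => ?_⟩
    have hu := (h u u.2).2
    have := shearDenom_ne_zero hs u.1
    simp only [genericShear] at hu
    field_simp at hu
    simp only [Pi.add_apply, Pi.smul_apply, smul_eq_mul, g, e, c']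
    linear_combination -hu
  have h1 : 1 ∈ Submodule.span K {g, e} := by
    have : 1 = g - s • m := by ext u; simp [g, m, shearDenom, mul_comm s]
    exact this ▸ sub_mem hg (Submodule.smul_mem _ _ hm)
  have hx : x ∈ Submodule.span K {g, e} := by
    have : x = e - s • c' - s ^ 3 • m := by
      ext u
      simp only [x, e, c', m, shearNum, Pi.sub_apply, Pi.smul_apply, smul_eq_mul]
      ring
    exact this ▸ sub_mem (sub_mem he (Submodule.smul_mem _ _ hc)) (Submodule.smul_mem _ _ hm)
  refine collinear_of_sub_mul_sub_eq fun u hu v hv w hw => ⟨?_, ?_, ?_⟩ <;>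
    apply (algebraMap F K).injective <;> simp only [map_mul, map_sub]
  · exact sub_mul_sub_eq_of_mem_span_pair h1 hx hm ⟨u, hu⟩ ⟨v, hv⟩ ⟨w, hw⟩
  · exact sub_mul_sub_eq_of_mem_span_pair h1 hx hc ⟨u, hu⟩ ⟨v, hv⟩ ⟨w, hw⟩
  · exact sub_mul_sub_eq_of_mem_span_pair h1 hm hc ⟨u, hu⟩ ⟨v, hv⟩ ⟨w, hw⟩

theorem sum_card_conj_le [DecidableEq F] (p : ℕ) [CharP F p] {Ω : Finset (F × F × F)} {k : ℕ}
    (hk : ∀ Z ⊆ Ω, Collinear F (Z : Set (F × F × F)) → #Z ≤ k) (hΩ : #Ω ≤ p ^ 2) :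
    ∑ u ∈ Ω, #{v ∈ Ω | IsConj u v} ≤ 2 * (10 ^ 8 * (Nat.sqrt #Ω + 1) + k) * #Ω := by
  classical
  have hs : Transcendental F (RatFunc.X : RatFunc F) := RatFunc.transcendental_X
  have : CharP (RatFunc F) p := charP_of_injective_algebraMap (algebraMap F (RatFunc F)).injective p
  let T : F × F × F → RatFunc F × RatFunc F × RatFunc F := genericShear RatFunc.X
  have hTinj : Function.Injective T := (genericShear_fst_injective hs).of_comp
  have hfilter (q : RatFunc F × RatFunc F × RatFunc F → Prop) [DecidablePred q] :
      #{v ∈ Ω.image T | q v} = #{v ∈ Ω | q (T v)} := by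
    rw [filter_image, card_image_of_injective _ hTinj]
  have hbound := sum_card_conj_le_of_injOn_fst p (Ω := Ω.image T) (k := k) ?_ ?_ ?_
  · rw [sum_image hTinj.injOn, card_image_of_injective _ hTinj] at hbound
    simpa only [hfilter, T, isConj_genericShear_iff hs] using hbound
  · rw [coe_image]
    exact ((genericShear_fst_injective hs).injOn).image_of_comp
  · intro a b c d
    rw [hfilter]
    exact hk _ (filter_subset _ _) (collinear_of_genericShear_mem_line hs
      fun u hu => (mem_filter.mp (mem_coe.mp hu)).2)
  · rwa [card_image_of_injective _ hTinj]

end GenericShear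

section RichLines

lemma sq_card_filter_mem_le {ι α : Type*} [DecidableEq α] (Ω : Finset ι) (f : ι → α)
    (A : Finset α) :
    #{t ∈ Ω | f t ∈ A} ^ 2 ≤ #A * ∑ t ∈ Ω, #{t' ∈ Ω | f t = f t'} := by
  have hsum : #{t ∈ Ω | f t ∈ A} = ∑ y ∈ A, #{t ∈ Ω | f t = y} :=
    (sum_card_fiberwise_eq_card_filter Ω A f).symm
  have hsq : ∑ y ∈ A, #{t ∈ Ω | f t = y} ^ 2 ≤ ∑ t ∈ Ω, #{t' ∈ Ω | f t = f t'} :=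
    calc ∑ y ∈ A, #{t ∈ Ω | f t = y} ^ 2
        = ∑ y ∈ A, ∑ t ∈ Ω with f t = y, #{t' ∈ Ω | f t = f t'} := by
          refine sum_congr rfl fun y _ => ?_
          rw [sq, ← smul_eq_mul, ← sum_const]
          refine sum_congr rfl fun t ht => ?_
          simp only [(mem_filter.mp ht).2, eq_comm]
      _ = ∑ t ∈ Ω with f t ∈ A, #{t' ∈ Ω | f t = f t'} := sum_fiberwise_eq_sum_filter _ _ _ _
      _ ≤ ∑ t ∈ Ω, #{t' ∈ Ω | f t = f t'} := sum_le_sum_of_subset (filter_subset _ _)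
  rw [hsum]
  exact sq_sum_le_card_mul_sum_sq.trans (Nat.mul_le_mul_left _ hsq)

lemma pow_four_mul_le_of_sq_mul_le {a k k₀ n s : ℕ} (hka : k ≤ a) (hk₀ : k₀ * k ≤ 2 * a ^ 2)
    (hn : 0 < n) (hs₁ : 1 ≤ s) (hs : s ^ 2 ≤ a * n)
    (h : k ^ 2 * n ≤ 2 * a ^ 2 * (10 ^ 8 * (s + 1) + k₀)) : k ^ 4 * n ≤ 10 ^ 18 * a ^ 5 := by
  obtain hle | hle := le_total k₀ (10 ^ 8 * s)
  · refine Nat.le_of_mul_le_mul_left (c := n) ?_ hn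
    calc n * (k ^ 4 * n) = (k ^ 2 * n) ^ 2 := by ring
      _ ≤ (2 * a ^ 2 * (10 ^ 8 * (s + s) + 10 ^ 8 * s)) ^ 2 :=
        Nat.pow_le_pow_left (h.trans (by gcongr)) 2
      _ = (6 * 10 ^ 8) ^ 2 * a ^ 4 * s ^ 2 := by ring
      _ ≤ (10 ^ 9) ^ 2 * a ^ 4 * (a * n) := by gcongr; norm_num
      _ = n * (10 ^ 18 * a ^ 5) := by ring
  · calc k ^ 4 * n = k ^ 2 * (k ^ 2 * n) := by ring
      _ ≤ k ^ 2 * (2 * a ^ 2 * (10 ^ 8 * (s + s) + k₀)) :=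
        Nat.mul_le_mul_left _ (h.trans (by gcongr))
      _ ≤ k ^ 2 * (2 * a ^ 2 * (3 * k₀)) := by gcongr; lia
      _ = 6 * a ^ 2 * k * (k₀ * k) := by ring
      _ ≤ 6 * a ^ 2 * a * (2 * a ^ 2) := by gcongr
      _ = 12 * a ^ 5 := by ring
      _ ≤ 10 ^ 18 * a ^ 5 := by gcongr; norm_num

variable {F : Type*} [Field F]

-- Collinear parameters `l` form a pencil: all the lines are concurrent, or all are parallel.
lemma exists_forall_ne_injOn_of_collinear {S : Set (F × F)} (hS : Collinear F S) :
    ∃ x₀, ∀ x ≠ x₀, Set.InjOn (fun l : F × F => l.1 * x + l.2) S := by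
  obtain ⟨l₀, v, hv⟩ := (collinear_iff_exists_forall_eq_smul_vadd S).mp hS
  refine ⟨-v.2 / v.1, fun x hx l hl l' hl' h => ?_⟩
  obtain ⟨r, rfl⟩ := hv l hl
  obtain ⟨r', rfl⟩ := hv l' hl'
  simp only [vadd_eq_add, Prod.fst_add, Prod.snd_add, Prod.smul_fst, Prod.smul_snd,
    smul_eq_mul] at h
  have hprod : (r - r') * (v.1 * x + v.2) = 0 := by linear_combination h
  obtain hr | hvx := mul_eq_zero.mp hprod
  · rw [sub_eq_zero.mp hr]
  · have hv₁ : v.1 = 0 := by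
      by_contra hv₁
      exact hx ((eq_div_iff hv₁).mpr (by linear_combination hvx))
    have hv₀ : v = 0 := Prod.ext hv₁ (by simpa [hv₁] using hvx)
    simp [hv₀]

variable [DecidableEq F]

/-- The number of points of `A × A` on the line `y = l.1 * x + l.2`. -/
def richness (A : Finset F) (l : F × F) : ℕ := #{x ∈ A | l.1 * x + l.2 ∈ A}

lemma richness_le_card (A : Finset F) (l : F × F) : richness A l ≤ #A := card_filter_le _ _

lemma card_mul_pred_le_of_collinear {A : Finset F} {L : Finset (F × F)} {k : ℕ}
    (hL : ∀ l ∈ L, k ≤ richness A l) (hcol : Collinear F (L : Set (F × F))) :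
    #L * (k - 1) ≤ #A ^ 2 := by
  obtain ⟨x₀, hx₀⟩ := exists_forall_ne_injOn_of_collinear hcol
  calc #L * (k - 1) ≤ ∑ l ∈ L, #({x ∈ A | l.1 * x + l.2 ∈ A}.erase x₀) := by
        rw [← smul_eq_mul]
        exact card_nsmul_le_sum _ _ _ fun l hl =>
          (Nat.sub_le_sub_right (hL l hl) 1).trans pred_card_le_card_erase
    _ = #(L.sigma fun l => {x ∈ A | l.1 * x + l.2 ∈ A}.erase x₀) := (card_sigma _ _).symm
    _ ≤ #(A ×ˢ A) := by
        refine card_le_card_of_injOn (fun t => (t.2, t.1.1 * t.2 + t.1.2)) ?_ ?_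
        · rintro ⟨l, x⟩ h
          simp only [mem_coe, mem_sigma, mem_erase, mem_filter, mem_product] at h ⊢
          exact h.2.2
        · rintro ⟨l, x⟩ h ⟨l', x'⟩ h' heq
          simp only [mem_coe, mem_sigma, mem_erase] at h h'
          obtain ⟨rfl, heq⟩ := Prod.mk.inj heq
          rw [hx₀ x h.2.1 h.1 h'.1 heq]
    _ = #A ^ 2 := by rw [card_product, sq]

lemma collinear_card_mul_le {A : Finset F} {L : Finset (F × F)} {k : ℕ} (hk : 2 ≤ k)
    (hkA : k ≤ #A) (hL : ∀ l ∈ L, k ≤ richness A l) {Z : Finset (F × F × F)} (hZ : Z ⊆ A ×ˢ L)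
    (hcol : Collinear F (Z : Set (F × F × F))) : #Z * k ≤ 2 * #A ^ 2 := by
  obtain ⟨w₀, v, hv⟩ := (collinear_iff_exists_forall_eq_smul_vadd _).mp hcol
  have hmem {w} (hw : w ∈ Z) := mem_product.mp (hZ hw)
  by_cases hv₁ : v.1 = 0
  · have hinj : Set.InjOn Prod.snd (Z : Set (F × F × F)) := by
      have hfst {w} (hw : w ∈ Z) : w.1 = w₀.1 := by obtain ⟨r, rfl⟩ := hv w hw; simp [hv₁]
      exact fun w hw w' hw' h => Prod.ext ((hfst hw).trans (hfst hw').symm) h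
    have hsnd : #(Z.image Prod.snd) * (k - 1) ≤ #A ^ 2 := by
      refine card_mul_pred_le_of_collinear (forall_mem_image.mpr fun w hw => hL _ (hmem hw).2) ?_
      refine (collinear_iff_exists_forall_eq_smul_vadd _).mpr ⟨w₀.2, v.2, fun l hl => ?_⟩
      obtain ⟨w, hw, rfl⟩ := mem_image.mp (mem_coe.mp hl)
      exact (hv w hw).imp fun r => congrArg Prod.snd
    rw [card_image_of_injOn hinj] at hsnd
    calc #Z * k ≤ #Z * (2 * (k - 1)) := by gcongr; lia
      _ ≤ 2 * #A ^ 2 := by linarith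
  · have hinj : Set.InjOn Prod.fst (Z : Set (F × F × F)) := fun w hw w' hw' h => by
      obtain ⟨r, rfl⟩ := hv w hw
      obtain ⟨r', rfl⟩ := hv w' hw'
      have hr : r = r' := mul_right_cancel₀ hv₁ (by simpa using h)
      rw [hr]
    have hZA : #Z ≤ #A := card_le_card_of_injOn _ (fun w hw => (hmem hw).1) hinj
    calc #Z * k ≤ #A * #A := Nat.mul_le_mul hZA hkA
      _ ≤ 2 * #A ^ 2 := by nlinarith

-- Two incidences `m x + c = m' x' + c'` become a conjugacy after exchanging the two lines.
lemma sum_card_line_eq_eq_sum_card_conj (A : Finset F) (L : Finset (F × F)) :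
    ∑ t ∈ A ×ˢ L, #{t' ∈ A ×ˢ L | t.2.1 * t.1 + t.2.2 = t'.2.1 * t'.1 + t'.2.2} =
      ∑ u ∈ A ×ˢ L, #{v ∈ A ×ˢ L | IsConj u v} := by
  simp only [card_filter, sum_product]
  refine sum_congr rfl fun x _ => ?_
  calc ∑ l ∈ L, ∑ x' ∈ A, ∑ l' ∈ L, (if l.1 * x + l.2 = l'.1 * x' + l'.2 then 1 else 0)
      = ∑ x' ∈ A, ∑ l ∈ L, ∑ l' ∈ L, (if l.1 * x + l.2 = l'.1 * x' + l'.2 then 1 else 0) :=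
        sum_comm
    _ = ∑ x' ∈ A, ∑ l' ∈ L, ∑ l ∈ L, (if l.1 * x + l.2 = l'.1 * x' + l'.2 then 1 else 0) :=
        sum_congr rfl fun x' _ => sum_comm
    _ = ∑ l' ∈ L, ∑ x' ∈ A, ∑ l ∈ L, (if IsConj (x, l') (x', l) then 1 else 0) := by
        rw [sum_comm]
        refine sum_congr rfl fun l' _ => sum_congr rfl fun x' _ => sum_congr rfl fun l _ => ?_
        congr 1
        simp only [IsConj, eq_iff_iff, add_comm l.2, add_comm l'.2]
        exact eq_comm

lemma sq_sum_richness_le (A : Finset F) (L : Finset (F × F)) :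
    (∑ l ∈ L, richness A l) ^ 2 ≤ #A * ∑ u ∈ A ×ˢ L, #{v ∈ A ×ˢ L | IsConj u v} := by
  have hsum : ∑ l ∈ L, richness A l = #{t ∈ A ×ˢ L | t.2.1 * t.1 + t.2.2 ∈ A} := by
    simp only [richness, card_filter]
    rw [sum_product_right]
  rw [hsum, ← sum_card_line_eq_eq_sum_card_conj]
  exact sq_card_filter_mem_le _ _ _

theorem pow_four_mul_card_le (p : ℕ) [CharP F p] {A : Finset F} {L : Finset (F × F)} {k : ℕ}
    (hk : 2 ≤ k) (hL : ∀ l ∈ L, k ≤ richness A l) (hp : #A * #L ≤ p ^ 2) :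
    k ^ 4 * #L ≤ 10 ^ 18 * #A ^ 5 := by
  obtain rfl | ⟨l₀, hl₀⟩ := L.eq_empty_or_nonempty
  · simp
  have hkA : k ≤ #A := (hL l₀ hl₀).trans (richness_le_card A l₀)
  have hLpos : 0 < #L := card_pos.mpr ⟨l₀, hl₀⟩
  have hconj := sum_card_conj_le p (Ω := A ×ˢ L) (k := 2 * #A ^ 2 / k)
    (fun Z hZ hcol => (Nat.le_div_iff_mul_le (by lia)).mpr
      (collinear_card_mul_le hk hkA hL hZ hcol))
    (by rwa [card_product])
  rw [card_product] at hconj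
  have hrich : #L * k ≤ ∑ l ∈ L, richness A l := by
    rw [← smul_eq_mul]
    exact card_nsmul_le_sum _ _ _ hL
  refine pow_four_mul_le_of_sq_mul_le hkA (k₀ := 2 * #A ^ 2 / k) (Nat.div_mul_le_self _ _) hLpos
    (s := Nat.sqrt (#A * #L)) (Nat.sqrt_pos.mpr (by nlinarith)) (Nat.sqrt_le' _) ?_
  refine Nat.le_of_mul_le_mul_left (c := #L) ?_ hLpos
  calc #L * (k ^ 2 * #L) = (#L * k) ^ 2 := by ring
    _ ≤ (∑ l ∈ L, richness A l) ^ 2 := by gcongr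
    _ ≤ #A * (2 * (10 ^ 8 * (Nat.sqrt (#A * #L) + 1) + 2 * #A ^ 2 / k) * (#A * #L)) :=
      (sq_sum_richness_le A L).trans (Nat.mul_le_mul_left _ hconj)
    _ = #L * (2 * #A ^ 2 * (10 ^ 8 * (Nat.sqrt (#A * #L) + 1) + 2 * #A ^ 2 / k)) := by ring

lemma sum_richness_pow_three_le_add [Fintype F] (A : Finset F) (K : ℕ) :
    ∑ l with K ≤ richness A l, richness A l ^ 3 ≤
      8 * K ^ 3 * #{l | K ≤ richness A l} + ∑ l with 2 * K ≤ richness A l, richness A l ^ 3 := by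
  rw [← sum_filter_not_add_sum_filter _ (fun l => 2 * K ≤ richness A l), filter_filter,
    filter_filter]
  gcongr ?_ + ?_
  · calc ∑ l with K ≤ richness A l ∧ ¬2 * K ≤ richness A l, richness A l ^ 3
        ≤ #{l | K ≤ richness A l ∧ ¬2 * K ≤ richness A l} • (2 * K) ^ 3 :=
          sum_le_card_nsmul _ _ _ fun l hl => by
            gcongr
            exact (not_le.mp (mem_filter.mp hl).2.2).le
      _ ≤ #{l | K ≤ richness A l} • (2 * K) ^ 3 := by
          gcongr
          exact And.left
      _ = 8 * K ^ 3 * #{l | K ≤ richness A l} := by rw [smul_eq_mul]; ring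
  · exact sum_le_sum_of_subset (monotone_filter_right _ fun l _ => And.right)

theorem sum_richness_pow_three_mul_le [Fintype F] (p : ℕ) [CharP F p] (A : Finset F) {K : ℕ}
    (hK : 2 ≤ K) (hp : #A * #{l | K ≤ richness A l} ≤ p ^ 2) :
    (∑ l with K ≤ richness A l, richness A l ^ 3) * K ≤ 16 * 10 ^ 18 * #A ^ 5 := by
  induction hd : #A + 1 - K using Nat.strong_induction_on generalizing K with
  | _ d ih =>
    obtain hKA | hKA := lt_or_ge #A K
    · have hempty : ({l | K ≤ richness A l} : Finset (F × F)) = ∅ :=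
        filter_eq_empty_iff.mpr fun l _ => not_le.mpr ((richness_le_card A l).trans_lt hKA)
      simp [hempty]
    have hmono : #{l | 2 * K ≤ richness A l} ≤ #{l | K ≤ richness A l} :=
      card_le_card (monotone_filter_right _ fun l _ h => by lia)
    have htail := ih _ (by lia) (K := 2 * K) (by lia)
      ((Nat.mul_le_mul_left _ hmono).trans hp) rfl
    have hcard := pow_four_mul_card_le p hK (L := {l | K ≤ richness A l}) (by simp) hp
    have hstep := Nat.mul_le_mul_right K (sum_richness_pow_three_le_add A K)
    linarith

end RichLines

section Moments

lemma sum_card_filter_sq {ι α : Type*} (s : Finset ι) (t : Finset α) (r : ι → α → Prop)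
    [∀ i, DecidablePred (r i)] :
    ∑ i ∈ s, #{x ∈ t | r i x} ^ 2 = ∑ x ∈ t, ∑ y ∈ t, #{i ∈ s | r i x ∧ r i y} := by
  classical
  calc ∑ i ∈ s, #{x ∈ t | r i x} ^ 2 = ∑ i ∈ s, #{w ∈ t ×ˢ t | r i w.1 ∧ r i w.2} := by
        simp only [sq, ← card_product, filter_product]
    _ = ∑ w ∈ t ×ˢ t, #{i ∈ s | r i w.1 ∧ r i w.2} :=
        sum_card_bipartiteAbove_eq_sum_card_bipartiteBelow _
    _ = _ := sum_product _ _ _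

lemma sum_card_filter_pow_three {ι α : Type*} (s : Finset ι) (t : Finset α) (r : ι → α → Prop)
    [∀ i, DecidablePred (r i)] :
    ∑ i ∈ s, #{x ∈ t | r i x} ^ 3 =
      ∑ x ∈ t, ∑ y ∈ t, ∑ z ∈ t, #{i ∈ s | r i x ∧ r i y ∧ r i z} := by
  classical
  calc ∑ i ∈ s, #{x ∈ t | r i x} ^ 3
      = ∑ i ∈ s, #{w ∈ t ×ˢ t ×ˢ t | r i w.1 ∧ r i w.2.1 ∧ r i w.2.2} := by
        refine sum_congr rfl fun i _ => ?_
        rw [pow_succ', sq, ← card_product, ← card_product, ← filter_product]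
        exact congrArg card (filter_product (r i) fun w : α × α => r i w.1 ∧ r i w.2).symm
    _ = ∑ w ∈ t ×ˢ t ×ˢ t, #{i ∈ s | r i w.1 ∧ r i w.2.1 ∧ r i w.2.2} :=
        sum_card_bipartiteAbove_eq_sum_card_bipartiteBelow _
    _ = _ := by simp only [sum_product]

lemma sum_ite_fst_eq {α : Type*} [DecidableEq α] {A : Finset α} {x : α} (hx : x ∈ A)
    (c : ℕ) : ∑ P ∈ A ×ˢ A, (if x = P.1 then c else 0) = #A * c := by
  rw [sum_product_right]
  simp only [sum_ite_eq, if_pos hx, sum_const, smul_eq_mul]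

variable {F : Type*} [Field F] [DecidableEq F]

/-- The number of ordered collinear triples of points of `A × A`, over an arbitrary field. -/
def collinearCount (A : Finset F) : ℕ :=
  #{t ∈ ((A ×ˢ A) ×ˢ (A ×ˢ A)) ×ˢ (A ×ˢ A) | (t.1.2.1 - t.1.1.1) * (t.2.2 - t.1.1.2) =
    (t.2.1 - t.1.1.1) * (t.1.2.2 - t.1.1.2)}

lemma richness_eq_card_filter_product (A : Finset F) (l : F × F) :
    richness A l = #{P ∈ A ×ˢ A | l.1 * P.1 + l.2 = P.2} := by
  rw [richness, card_filter, card_filter, sum_product]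
  simp only [sum_ite_eq]

variable [Fintype F]

lemma card_filter_mul_eq_and_mul_eq_of_ne_zero {a : F} (ha : a ≠ 0) (b c d : F) :
    #{m : F | m * a = b ∧ m * c = d} = if a * d = c * b then 1 else 0 := by
  have hm (m : F) : m * a = b ↔ m = b / a := (eq_div_iff ha).symm
  have hd : b / a * c = d ↔ a * d = c * b := by
    rw [div_mul_eq_mul_div, div_eq_iff ha, mul_comm b, mul_comm d, eq_comm]
  simp only [hm, card_filter, ite_and, sum_ite_eq', mem_univ, if_true, hd]

lemma card_filter_mul_eq_and_mul_eq (a b c d : F) :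
    #{m : F | m * a = b ∧ m * c = d} + (if a = 0 ∧ c = 0 then 1 else 0) =
      (if a * d = c * b then 1 else 0) +
        (if (a = 0 ∧ b = 0) ∧ c = 0 ∧ d = 0 then Fintype.card F else 0) := by
  by_cases ha : a = 0
  · by_cases hc : c = 0
    · by_cases hbd : b = 0 ∧ d = 0 <;> simp [ha, hc, eq_comm (a := (0 : F)), hbd, add_comm]
    · have hcard := card_filter_mul_eq_and_mul_eq_of_ne_zero hc d a b
      simp only [and_comm, eq_comm (a := c * b)] at hcard
      simp only [hcard, hc, false_and, and_false, if_false]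
  · simp only [card_filter_mul_eq_and_mul_eq_of_ne_zero ha, ha, false_and, if_false]

lemma card_filter_line (P : F × F) (q : F → Prop) [DecidablePred q] :
    #{l : F × F | l.1 * P.1 + l.2 = P.2 ∧ q l.1} = #{m | q m} := by
  have hline (l : F × F) : l.1 * P.1 + l.2 = P.2 ↔ l.2 = P.2 - l.1 * P.1 := eq_sub_iff_add_eq'.symm
  refine card_nbij' Prod.fst (fun m => (m, P.2 - m * P.1)) (fun l hl => ?_) (fun m hm => ?_)
    (fun l hl => ?_) fun m _ => rfl
  · exact mem_filter.mpr ⟨mem_univ _, (mem_filter.mp hl).2.2⟩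
  · exact mem_filter.mpr ⟨mem_univ _, (hline _).mpr rfl, (mem_filter.mp hm).2⟩
  · exact Prod.ext rfl ((hline l).mp (mem_filter.mp hl).2.1).symm

lemma card_lines_through_add (P Q R : F × F) :
    #{l : F × F | l.1 * P.1 + l.2 = P.2 ∧ l.1 * Q.1 + l.2 = Q.2 ∧ l.1 * R.1 + l.2 = R.2} +
        (if P.1 = Q.1 ∧ P.1 = R.1 then 1 else 0) =
      (if (Q.1 - P.1) * (R.2 - P.2) = (R.1 - P.1) * (Q.2 - P.2) then 1 else 0) +
        (if P = Q ∧ P = R then Fintype.card F else 0) := by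
  have hslope (l : F × F) :
      l.1 * P.1 + l.2 = P.2 ∧ l.1 * Q.1 + l.2 = Q.2 ∧ l.1 * R.1 + l.2 = R.2 ↔
        l.1 * P.1 + l.2 = P.2 ∧ l.1 * (Q.1 - P.1) = Q.2 - P.2 ∧ l.1 * (R.1 - P.1) = R.2 - P.2 :=
    and_congr_right fun h => by
      have hsub (Q : F × F) : l.1 * Q.1 + l.2 = Q.2 ↔ l.1 * (Q.1 - P.1) = Q.2 - P.2 :=
        ⟨fun e => by linear_combination e - h, fun e => by linear_combination e + h⟩
      rw [hsub Q, hsub R]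
  have hcard := card_filter_mul_eq_and_mul_eq (Q.1 - P.1) (Q.2 - P.2) (R.1 - P.1) (R.2 - P.2)
  simp only [sub_eq_zero, eq_comm (b := P.1), eq_comm (b := P.2), ← Prod.ext_iff] at hcard
  simp only [hslope]
  rw [card_filter_line P fun m => m * (Q.1 - P.1) = Q.2 - P.2 ∧ m * (R.1 - P.1) = R.2 - P.2]
  exact hcard

lemma sum_richness (A : Finset F) : ∑ l, richness A l = Fintype.card F * #A ^ 2 := by
  have hlines (P : F × F) : #{l : F × F | l.1 * P.1 + l.2 = P.2} = Fintype.card F := by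
    simpa using card_filter_line P fun _ => True
  simp only [richness_eq_card_filter_product, card_filter _ (A ×ˢ A)]
  rw [sum_comm]
  simp only [← card_filter, hlines, sum_const, smul_eq_mul, card_product]
  ring

lemma sum_richness_sq_add (A : Finset F) :
    ∑ l, richness A l ^ 2 + #A ^ 3 = #A ^ 4 + Fintype.card F * #A ^ 2 := by
  have hlines (P Q : F × F) : #{l : F × F | l.1 * P.1 + l.2 = P.2 ∧ l.1 * Q.1 + l.2 = Q.2} +
      (if P.1 = Q.1 then 1 else 0) = 1 + (if P = Q then Fintype.card F else 0) := by
    simpa using card_lines_through_add P P Q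
  have hvert : ∑ P ∈ A ×ˢ A, ∑ Q ∈ A ×ˢ A, (if P.1 = Q.1 then 1 else 0) = #A ^ 3 := by
    rw [sum_congr rfl fun P hP => sum_ite_fst_eq (mem_product.mp hP).1 1, sum_const, smul_eq_mul,
      card_product]
    ring
  have hdiag : ∑ P ∈ A ×ˢ A, ∑ Q ∈ A ×ˢ A, (if P = Q then Fintype.card F else 0) =
      Fintype.card F * #A ^ 2 := by
    rw [sum_congr rfl fun P hP => (sum_ite_eq _ P _).trans (if_pos hP), sum_const, smul_eq_mul,
      card_product]
    ring
  simp only [richness_eq_card_filter_product]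
  rw [sum_card_filter_sq univ (A ×ˢ A) fun (l : F × F) P => l.1 * P.1 + l.2 = P.2,
    ← hvert, ← hdiag]
  simp only [← sum_add_distrib, hlines]
  simp only [sum_add_distrib, sum_const, smul_eq_mul, card_product]
  ring

lemma sum_richness_pow_three_add (A : Finset F) :
    ∑ l, richness A l ^ 3 + #A ^ 4 = collinearCount A + Fintype.card F * #A ^ 2 := by
  have hvert : ∑ P ∈ A ×ˢ A, ∑ Q ∈ A ×ˢ A, ∑ R ∈ A ×ˢ A,
      (if P.1 = Q.1 ∧ P.1 = R.1 then 1 else 0) = #A ^ 4 := by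
    have hP (P) (hP : P ∈ A ×ˢ A) : ∑ Q ∈ A ×ˢ A, ∑ R ∈ A ×ˢ A,
        (if P.1 = Q.1 ∧ P.1 = R.1 then 1 else 0) = #A ^ 2 := by
      simp only [ite_and, sum_ite_irrel, sum_const_zero, sum_ite_fst_eq (mem_product.mp hP).1,
        mul_one, sq]
    rw [sum_congr rfl hP, sum_const, smul_eq_mul, card_product]
    ring
  have hdiag : ∑ P ∈ A ×ˢ A, ∑ Q ∈ A ×ˢ A, ∑ R ∈ A ×ˢ A,
      (if P = Q ∧ P = R then Fintype.card F else 0) = Fintype.card F * #A ^ 2 := by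
    have hP (P) (hP : P ∈ A ×ˢ A) : ∑ Q ∈ A ×ˢ A, ∑ R ∈ A ×ˢ A,
        (if P = Q ∧ P = R then Fintype.card F else 0) = Fintype.card F := by
      simp only [ite_and, sum_ite_irrel, sum_const_zero, sum_ite_eq, if_pos hP]
    rw [sum_congr rfl hP, sum_const, smul_eq_mul, card_product]
    ring
  have hcount : collinearCount A = ∑ P ∈ A ×ˢ A, ∑ Q ∈ A ×ˢ A, ∑ R ∈ A ×ˢ A,
      (if (Q.1 - P.1) * (R.2 - P.2) = (R.1 - P.1) * (Q.2 - P.2) then 1 else 0) := by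
    rw [collinearCount, card_filter, sum_product, sum_product]
  simp only [richness_eq_card_filter_product]
  rw [sum_card_filter_pow_three univ (A ×ˢ A) fun (l : F × F) P => l.1 * P.1 + l.2 = P.2,
    hcount, ← hvert, ← hdiag]
  simp only [← sum_add_distrib, card_lines_through_add]

end Moments

section Bounds

variable {F : Type*} [Field F] [DecidableEq F] [Fintype F]

lemma sum_richness_cast (A : Finset F) :
    ∑ l, (richness A l : ℝ) = Fintype.card F * (#A : ℝ) ^ 2 := by
  exact_mod_cast sum_richness A

lemma sum_richness_sq_cast (A : Finset F) :
    ∑ l, (richness A l : ℝ) ^ 2 = (#A : ℝ) ^ 4 - (#A : ℝ) ^ 3 + Fintype.card F * (#A : ℝ) ^ 2 := by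
  linarith [(by exact_mod_cast sum_richness_sq_add A : ∑ l, (richness A l : ℝ) ^ 2 + (#A : ℝ) ^ 3 =
    (#A : ℝ) ^ 4 + Fintype.card F * (#A : ℝ) ^ 2)]

lemma sum_richness_pow_three_cast (A : Finset F) :
    ∑ l, (richness A l : ℝ) ^ 3 =
      collinearCount A - (#A : ℝ) ^ 4 + Fintype.card F * (#A : ℝ) ^ 2 := by
  have h : ∑ l, (richness A l : ℝ) ^ 3 + (#A : ℝ) ^ 4 =
      collinearCount A + Fintype.card F * (#A : ℝ) ^ 2 := by
    exact_mod_cast sum_richness_pow_three_add A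
  linarith

lemma sq_sum_richness_sq_le (A : Finset F) :
    (∑ l, (richness A l : ℝ) ^ 2) ^ 2 ≤
      (∑ l, (richness A l : ℝ)) * ∑ l, (richness A l : ℝ) ^ 3 :=
  sum_sq_le_sum_mul_sum_of_sq_le_mul _ (fun _ _ => by positivity) (fun _ _ => by positivity)
    fun _ _ => (by ring : _ = _).le

theorem card_pow_six_div_le_collinearCount (A : Finset F) :
    (#A : ℝ) ^ 6 / Fintype.card F ≤ collinearCount A := by
  obtain rfl | hA := A.eq_empty_or_nonempty
  · simp
  have hcs := sq_sum_richness_sq_le A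
  rw [sum_richness_cast, sum_richness_sq_cast, sum_richness_pow_three_cast] at hcs
  have ha : (0 : ℝ) < #A := by exact_mod_cast hA.card_pos
  have haq : (#A : ℝ) ≤ Fintype.card F := by exact_mod_cast card_le_univ A
  have hdich : (#A : ℝ) = 1 ∨ (2 : ℝ) ≤ #A := by
    have : #A = 1 ∨ 2 ≤ #A := by have := hA.card_pos; lia
    exact_mod_cast this
  generalize (#A : ℝ) = a at *
  generalize (collinearCount A : ℝ) = T at *
  generalize (Fintype.card F : ℝ) = q at *
  have hq : 0 < q := ha.trans_le haq
  have hgain : 0 ≤ 2 * a * (q - a) + q * (a - 2) + a := by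
    obtain rfl | h2 := hdich
    · linarith
    · have := mul_nonneg (by linarith : 0 ≤ 2 * a) (sub_nonneg.mpr haq)
      have := mul_nonneg hq.le (sub_nonneg.mpr h2)
      linarith
  have hmain : a ^ 2 * (a ^ 3 * (2 * a * (q - a) + q * (a - 2) + a)) ≤ a ^ 2 * (T * q - a ^ 6) := by
    linarith
  rw [div_le_iff₀ hq, ← sub_nonneg]
  exact (by positivity : 0 ≤ a ^ 3 * (2 * a * (q - a) + q * (a - 2) + a)).trans
    (le_of_mul_le_mul_left hmain (by positivity))

lemma sum_richness_pow_three_le_div (p : ℕ) [CharP F p] {A : Finset F} {t : ℝ} (ht : 1 ≤ t)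
    (hp : #A * #{l | 2 * t ≤ richness A l} ≤ p ^ 2) :
    ∑ l with 2 * t ≤ richness A l, (richness A l : ℝ) ^ 3 ≤ 8 * 10 ^ 18 * ((#A : ℝ) ^ 5 / t) := by
  simp only [← Nat.ceil_le] at hp ⊢
  have hK : 2 ≤ ⌈2 * t⌉₊ := Nat.lt_ceil.mpr (by push_cast; linarith)
  have htail : (∑ l with ⌈2 * t⌉₊ ≤ richness A l, (richness A l : ℝ) ^ 3) * ⌈2 * t⌉₊ ≤
      16 * 10 ^ 18 * #A ^ 5 := by
    exact_mod_cast sum_richness_pow_three_mul_le p A hK hp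
  have hsum : 0 ≤ ∑ l with ⌈2 * t⌉₊ ≤ richness A l, (richness A l : ℝ) ^ 3 := by positivity
  rw [← mul_div_assoc, le_div_iff₀ (by linarith)]
  linarith [mul_le_mul_of_nonneg_left (Nat.le_ceil (2 * t)) hsum]

theorem sum_weight_mul_richness_le (p : ℕ) [CharP F p] {A : Finset F} {w : F × F → ℝ} {t : ℝ}
    (ht : 1 ≤ t) (hw₀ : ∀ l, 0 ≤ w l)
    (hw : ∀ l, 2 * t ≤ richness A l → t ^ 2 ≤ w l ∧ w l ≤ (richness A l : ℝ) ^ 2)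
    (hsum : #A * ∑ l, w l ≤ t ^ 2 * (p : ℝ) ^ 2) :
    ∑ l, w l * richness A l ≤ 2 * t * ∑ l, w l + 8 * 10 ^ 18 * ((#A : ℝ) ^ 5 / t) := by
  have hcard : #{l | 2 * t ≤ richness A l} * t ^ 2 ≤ ∑ l, w l :=
    calc #{l | 2 * t ≤ richness A l} * t ^ 2 ≤ ∑ l with 2 * t ≤ richness A l, w l := by
          rw [← nsmul_eq_mul]
          exact card_nsmul_le_sum _ _ _ fun l hl => (hw l (mem_filter.mp hl).2).1
      _ ≤ ∑ l, w l := sum_le_sum_of_subset_of_nonneg (filter_subset _ _) fun l _ _ => hw₀ l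
  have hp : #A * #{l | 2 * t ≤ richness A l} ≤ p ^ 2 := by
    have h : t ^ 2 * (#A * #{l | 2 * t ≤ richness A l}) ≤ t ^ 2 * (p : ℝ) ^ 2 := by
      linarith [mul_le_mul_of_nonneg_left hcard (Nat.cast_nonneg (α := ℝ) #A)]
    exact_mod_cast le_of_mul_le_mul_left h (by positivity)
  rw [← sum_filter_not_add_sum_filter univ (fun l => 2 * t ≤ richness A l)]
  gcongr ?_ + ?_
  · calc ∑ l with ¬2 * t ≤ richness A l, w l * richness A l
        ≤ ∑ l with ¬2 * t ≤ richness A l, w l * (2 * t) :=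
          sum_le_sum fun l hl => mul_le_mul_of_nonneg_left
            (not_le.mp (mem_filter.mp hl).2).le (hw₀ l)
      _ ≤ ∑ l, w l * (2 * t) := sum_le_sum_of_subset_of_nonneg (filter_subset _ _)
          fun l _ _ => mul_nonneg (hw₀ l) (by linarith)
      _ = 2 * t * ∑ l, w l := by rw [← sum_mul, mul_comm]
  · refine (sum_le_sum fun l hl => ?_).trans (sum_richness_pow_three_le_div p ht hp)
    rw [pow_succ]
    exact mul_le_mul_of_nonneg_right (hw l (mem_filter.mp hl).2).2 (Nat.cast_nonneg _)

theorem collinearCount_le_of_sq_card_le {F : Type*} [Field F] [DecidableEq F] [Finite F] (p : ℕ)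
    [CharP F p] {A : Finset F} (hA : A.Nonempty) (hAp : #A ^ 2 ≤ p) :
    (collinearCount A : ℝ) ≤ 10 ^ 19 * ((#A : ℝ) ^ 4 * √(#A : ℝ)) := by
  cases nonempty_fintype F
  have ha : (1 : ℝ) ≤ #A := by exact_mod_cast hA.card_pos
  have hap : (#A : ℝ) ^ 4 ≤ (p : ℝ) ^ 2 := by
    rw [(by ring : (#A : ℝ) ^ 4 = (#A ^ 2) ^ 2)]
    gcongr
    exact_mod_cast hAp
  have ht : 1 ≤ √(#A : ℝ) := Real.one_le_sqrt.mpr ha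
  have htt : √(#A : ℝ) ^ 2 = #A := Real.sq_sqrt (by linarith)
  have hw : ∑ l, ((richness A l : ℝ) ^ 2 - richness A l) = (#A : ℝ) ^ 4 - (#A : ℝ) ^ 3 := by
    rw [sum_sub_distrib, sum_richness_cast, sum_richness_sq_cast]
    ring
  have hwr : ∑ l, ((richness A l : ℝ) ^ 2 - richness A l) * richness A l =
      collinearCount A - 2 * (#A : ℝ) ^ 4 + (#A : ℝ) ^ 3 := by
    simp only [sub_mul, ← pow_succ, ← sq]
    rw [sum_sub_distrib, sum_richness_pow_three_cast, sum_richness_sq_cast]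
    ring
  have hbound := sum_weight_mul_richness_le p (A := A)
    (w := fun l => (richness A l : ℝ) ^ 2 - richness A l) ht ?_ ?_ ?_
  · rw [hw, hwr] at hbound
    have hdiv : (#A : ℝ) ^ 5 / √(#A : ℝ) = (#A : ℝ) ^ 4 * √(#A : ℝ) := by
      rw [div_eq_iff (by linarith), mul_assoc, ← sq, htt]
      ring
    rw [hdiv] at hbound
    have h₁ : (#A : ℝ) ^ 4 ≤ (#A : ℝ) ^ 4 * √(#A : ℝ) := le_mul_of_one_le_right (by positivity) ht
    have h₂ : 0 ≤ √(#A : ℝ) * (#A : ℝ) ^ 3 := by positivity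
    have h₃ : 0 ≤ (#A : ℝ) ^ 3 := by positivity
    linarith
  · intro l
    have h : richness A l ≤ richness A l ^ 2 := Nat.le_self_pow two_ne_zero _
    exact sub_nonneg.mpr (by exact_mod_cast h)
  · intro l hl
    constructor <;> nlinarith
  · rw [hw, htt]
    gcongr
    linarith [(by positivity : 0 ≤ (#A : ℝ) ^ 3)]

lemma sum_richness_sub_mean_sq (A : Finset F) :
    ∑ l, ((richness A l : ℝ) - (#A : ℝ) ^ 2 / Fintype.card F) ^ 2 =
      Fintype.card F * (#A : ℝ) ^ 2 - (#A : ℝ) ^ 3 := by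
  have hq : (Fintype.card F : ℝ) ≠ 0 := by exact_mod_cast Fintype.card_ne_zero
  simp only [sub_sq]
  rw [sum_add_distrib, sum_sub_distrib, ← sum_mul, ← mul_sum, sum_richness_cast,
    sum_richness_sq_cast, sum_const, card_univ, Fintype.card_prod, nsmul_eq_mul]
  push_cast
  field_simp
  ring

lemma sum_richness_sub_mean_sq_mul (A : Finset F) :
    ∑ l, ((richness A l : ℝ) - (#A : ℝ) ^ 2 / Fintype.card F) ^ 2 * richness A l =
      collinearCount A - (#A : ℝ) ^ 6 / Fintype.card F - 3 * (#A : ℝ) ^ 4 +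
        2 * ((#A : ℝ) ^ 5 / Fintype.card F) + Fintype.card F * (#A : ℝ) ^ 2 := by
  have hq : (Fintype.card F : ℝ) ≠ 0 := by exact_mod_cast Fintype.card_ne_zero
  have hexpand (r μ : ℝ) : (r - μ) ^ 2 * r = r ^ 3 - 2 * μ * r ^ 2 + μ ^ 2 * r := by ring
  simp only [hexpand]
  rw [sum_add_distrib, sum_sub_distrib, ← mul_sum, ← mul_sum, sum_richness_cast,
    sum_richness_sq_cast, sum_richness_pow_three_cast]
  field_simp
  ring

-- The scale `t` is `√a` times the standard deviation `a / √p` of the richness of a line: it exceeds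
-- the mean `a ^ 2 / p`, and balances the two error terms `t * (p * a ^ 2)` and `a ^ 5 / t`.
lemma exists_deviation_scale {a p : ℝ} (ha : 1 ≤ a) (hap : a ≤ p) (hpa : p ≤ a ^ 2) :
    ∃ t, 1 ≤ t ∧ t ^ 2 * p = a ^ 3 ∧ a ^ 2 ≤ t * p ∧ √p * (a ^ 3 * √a) = t * p * a ^ 2 := by
  have hsa : √a ^ 2 = a := Real.sq_sqrt (by linarith)
  have hsp : √p ^ 2 = p := Real.sq_sqrt (by linarith)
  have hp : 0 < √p := Real.sqrt_pos.mpr (by linarith)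
  have htp : a * √a / √p * √p = a * √a := div_mul_cancel₀ _ hp.ne'
  refine ⟨a * √a / √p, (one_le_div hp).mpr ?_, ?_, ?_, ?_⟩
  · exact (Real.sqrt_le_iff.mpr ⟨by linarith, hpa⟩).trans
      (le_mul_of_one_le_right (by linarith) (Real.one_le_sqrt.mpr ha))
  · nth_rw 2 [← hsp]
    rw [← mul_pow, htp, mul_pow, hsa, ← pow_succ]
  · calc a ^ 2 = a * √a * √a := by rw [mul_assoc, ← sq, hsa, sq]
      _ ≤ a * √a * √p := by gcongr
      _ = a * √a / √p * p := by linear_combination a * √a / √p * hsp - √p * htp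
  · linear_combination a ^ 2 * (a * √a / √p * hsp - √p * htp)

theorem collinearCount_sub_le_of_le_sq_card (p : ℕ) [CharP F p] (hF : Fintype.card F = p)
    {A : Finset F} (hA : A.Nonempty) (hpA : p ≤ #A ^ 2) :
    (collinearCount A : ℝ) - (#A : ℝ) ^ 6 / p ≤
      10 ^ 19 * (√(p : ℝ) * ((#A : ℝ) ^ 3 * √(#A : ℝ))) := by
  have ha : (1 : ℝ) ≤ #A := by exact_mod_cast hA.card_pos
  have hap : (#A : ℝ) ≤ p := by exact_mod_cast hF ▸ card_le_univ A
  obtain ⟨t, ht, htt, hmean, hM⟩ := exists_deviation_scale ha hap (by exact_mod_cast hpA)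
  have hsum := sum_richness_sub_mean_sq A
  have hsum_mul := sum_richness_sub_mean_sq_mul A
  rw [hF] at hsum hsum_mul
  have hbound := sum_weight_mul_richness_le p (A := A)
    (w := fun l => ((richness A l : ℝ) - (#A : ℝ) ^ 2 / p) ^ 2) ht (fun l => sq_nonneg _) ?_ ?_
  · have hdiv : (#A : ℝ) ^ 5 / t = t * p * (#A : ℝ) ^ 2 := by
      rw [div_eq_iff (by linarith)]
      linear_combination -(#A : ℝ) ^ 2 * htt
    rw [hsum, hsum_mul, hdiv] at hbound
    rw [hM]
    have h₁ := mul_le_mul_of_nonneg_right hmean (sq_nonneg (#A : ℝ))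
    have h₂ : 0 ≤ (#A : ℝ) ^ 5 / p := by positivity
    have h₃ : 0 ≤ p * (#A : ℝ) ^ 2 := by positivity
    have h₄ : 0 ≤ t * (#A : ℝ) ^ 3 := by positivity
    have h₅ : 0 ≤ t * p * (#A : ℝ) ^ 2 := by positivity
    linarith
  · intro l hl
    have hμ : (#A : ℝ) ^ 2 / p ≤ t := (div_le_iff₀ (by linarith)).mpr hmean
    have hμ₀ : 0 ≤ (#A : ℝ) ^ 2 / p := by positivity
    exact ⟨pow_le_pow_left₀ (by linarith) (by linarith) 2,
      pow_le_pow_left₀ (by linarith) (by linarith) 2⟩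
  · rw [hsum]
    have h : 0 ≤ (#A : ℝ) ^ 4 := by positivity
    linear_combination h - p * htt

end Bounds

section Main

lemma rpow_add_half {x : ℝ} (hx : 0 < x) (n : ℕ) : x ^ ((n : ℝ) + 1 / 2) = x ^ n * √x := by
  rw [Real.rpow_add hx, Real.rpow_natCast, Real.sqrt_eq_rpow]

theorem collinearCount_sub_le_min {F : Type*} [Field F] [DecidableEq F] [Fintype F] (p : ℕ)
    [CharP F p] (hF : Fintype.card F = p) {A : Finset F} (hA : A.Nonempty) :
    (collinearCount A : ℝ) - (#A : ℝ) ^ 6 / p ≤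
      10 ^ 19 * min (√(p : ℝ) * ((#A : ℝ) ^ 3 * √(#A : ℝ))) ((#A : ℝ) ^ 4 * √(#A : ℝ)) := by
  have hfactor : (#A : ℝ) ^ 4 * √(#A : ℝ) = #A * ((#A : ℝ) ^ 3 * √(#A : ℝ)) := by ring
  obtain hsmall | hlarge := le_total (#A ^ 2) p
  · have h : (#A : ℝ) ≤ √(p : ℝ) := Real.le_sqrt_of_sq_le (by exact_mod_cast hsmall)
    rw [min_eq_right (by rw [hfactor]; gcongr)]
    exact (sub_le_self _ (by positivity)).trans (collinearCount_le_of_sq_card_le p hA hsmall)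
  · have h : √(p : ℝ) ≤ #A := Real.sqrt_le_iff.mpr ⟨by positivity, by exact_mod_cast hlarge⟩
    rw [min_eq_left (by rw [hfactor]; gcongr)]
    exact collinearCount_sub_le_of_le_sq_card p hF hA hlarge

end Main

end CollinearTriples

theorem stmt6 :
    ∃ C : ℝ,
      ∀ (p : ℕ), p.Prime → Odd p →
        ∀ A : Finset (ZMod p),
          0 ≤ (collinearTriples p A : ℝ) - (A.card : ℝ) ^ 6 / p ∧
          (collinearTriples p A : ℝ) - (A.card : ℝ) ^ 6 / p ≤
            C * min ((p : ℝ) ^ ((1 : ℝ) / 2) * (A.card : ℝ) ^ ((7 : ℝ) / 2))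
              ((A.card : ℝ) ^ ((9 : ℝ) / 2)) := by
  refine ⟨10 ^ 19, fun p hp _ A => ?_⟩
  have : Fact p.Prime := ⟨hp⟩
  have hcount : collinearTriples p A = CollinearTriples.collinearCount A := rfl
  rw [hcount]
  constructor
  · have hlower := CollinearTriples.card_pow_six_div_le_collinearCount A
    rwa [ZMod.card, ← sub_nonneg] at hlower
  · obtain rfl | hA := A.eq_empty_or_nonempty
    · simp [CollinearTriples.collinearCount]
    · have hcard : (0 : ℝ) < #A := by exact_mod_cast hA.card_pos
      have hseven : (#A : ℝ) ^ ((7 : ℝ) / 2) = #A ^ 3 * √(#A : ℝ) := by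
        rw [← CollinearTriples.rpow_add_half hcard]
        norm_num
      have hnine : (#A : ℝ) ^ ((9 : ℝ) / 2) = #A ^ 4 * √(#A : ℝ) := by
        rw [← CollinearTriples.rpow_add_half hcard]
        norm_num
      rw [← Real.sqrt_eq_rpow, hseven, hnine]
      exact CollinearTriples.collinearCount_sub_le_min p (ZMod.card p) hA
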